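/- If (Y,f) is a transitive finitely presented system, then among all pairs ((X,g), α) where (X,g) is a transitive Smale space and α : X → Y is a u-resolving factor map, there is a minimal one (Y₊, π₊): for every such (X, α) there exists a u-resolving factor map β : X → Y₊ with α = π₊ ∘ β. -/

import Mathlib

/-!
Call a point of `Y` backward generic if its backward orbit keeps visiting every nonempty open set.
The space `Y₊` is the completion of the set of backward generic points for a metric finer than that
of `Y`: two points are close if, for a long stretch of time around `0`, their orbits are close and
their unstable plaques match under sliding along stable sets.

The images of rectangles in the covering subshift cut `Y` into finitely many pieces on each of
which plaques match, so the fine metric is totally bounded and `Y₊` is compact. Brackets exist in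
`Y₊` because fine closeness is exactly the statement that the plaques meet the stable sets.
Expansiveness and the u-resolving property of `Y₊ → Y` hold because plaques that match in the past
keep matching under forward iteration, so that points of a fibre which are close in the past
coincide. The backward orbit of a generic point visits the interior of some rectangle, so on generic
points the fine metric induces the topology of `Y`, whence `Y₊` is transitive.

For minimality let `α : X → Y` be u-resolving, with `X` a Smale space. Over a generic point the
unstable plaques of `Y` lift to unstable sets of `X`, and the brackets of `X` project to the
required matchings of plaques. Hence `α` is uniformly continuous into the fine metric on a dense
set, and extends to `β : X → Y₊`.
-/

open Filter Topology Set

/-- `f` is expansive with expansive constant `c`. -/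
def Expansive {X : Type*} [MetricSpace X] (f : Equiv.Perm X) (c : ℝ) : Prop :=
  ∀ p q : X, p ≠ q → ∃ n : ℤ, c < dist ((f ^ n) p) ((f ^ n) q)

/-- The ε-stable set of `x`. -/
def Ws {X : Type*} [MetricSpace X] (f : Equiv.Perm X) (ε : ℝ) (x : X) : Set X :=
  {y | ∀ n : ℕ, dist ((f ^ (n : ℤ)) x) ((f ^ (n : ℤ)) y) < ε}

/-- The ε-unstable set of `x`. -/
def Wu {X : Type*} [MetricSpace X] (f : Equiv.Perm X) (ε : ℝ) (x : X) : Set X :=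
  {y | ∀ n : ℕ, dist ((f ^ (-(n : ℤ))) x) ((f ^ (-(n : ℤ))) y) < ε}

/-- The stable set of `x`. -/
def stableSet {X : Type*} [MetricSpace X] (f : Equiv.Perm X) (x : X) : Set X :=
  {y | Filter.Tendsto (fun n : ℕ => dist ((f ^ (n : ℤ)) x) ((f ^ (n : ℤ)) y))
    Filter.atTop (nhds 0)}

/-- The unstable set of `x`. -/
def unstableSet {X : Type*} [MetricSpace X] (f : Equiv.Perm X) (x : X) : Set X :=
  {y | Filter.Tendsto (fun n : ℕ => dist ((f ^ (-(n : ℤ))) x) ((f ^ (-(n : ℤ))) y))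
    Filter.atTop (nhds 0)}

/-- Canonical coordinates: for all sufficiently small ε > 0 there is δ > 0 such that
points at distance < δ have a unique bracket `[x,y] = W^s_ε(x) ∩ W^u_ε(y)`. -/
def CanonicalCoords {X : Type*} [MetricSpace X] (f : Equiv.Perm X) : Prop :=
  ∃ ε₀ > 0, ∀ ε : ℝ, 0 < ε → ε ≤ ε₀ → ∃ δ > 0, ∀ x y : X, dist x y < δ →
    ∃! z, z ∈ Ws f ε x ∩ Wu f ε y

/-- A Smale space: an expansive homeomorphism with canonical coordinates. -/
def IsSmale {X : Type*} [MetricSpace X] (f : Equiv.Perm X) : Prop :=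
  Continuous (⇑f) ∧ Continuous (⇑f.symm) ∧ (∃ c > 0, Expansive f c) ∧ CanonicalCoords f

/-- Topological transitivity. -/
def TopTransitive {X : Type*} [MetricSpace X] (f : Equiv.Perm X) : Prop :=
  ∀ U V : Set X, IsOpen U → IsOpen V → U.Nonempty → V.Nonempty →
    ∃ n : ℕ, ((f ^ (n : ℤ)) ⁻¹' U ∩ V).Nonempty

/-- A periodic point of `f`. -/
def IsPeriodicPoint {X : Type*} [MetricSpace X] (f : Equiv.Perm X) (p : X) : Prop :=
  ∃ N : ℕ, 0 < N ∧ (f ^ (N : ℤ)) p = p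

/-- A factor map (surjective continuous semiconjugacy). -/
def IsFactorMap {X Y : Type*} [MetricSpace X] [MetricSpace Y]
    (F : Equiv.Perm X) (f : Equiv.Perm Y) (π : X → Y) : Prop :=
  Continuous π ∧ Function.Surjective π ∧ ∀ x, π (F x) = f (π x)

/-- A map is u-resolving if it is injective on unstable sets. -/
def UResolving {X Y : Type*} [MetricSpace X] (F : Equiv.Perm X) (π : X → Y) : Prop :=
  ∀ x : X, Set.InjOn π (unstableSet F x)

/-- A map is s-resolving if it is injective on stable sets. -/
def SResolving {X Y : Type*} [MetricSpace X] (F : Equiv.Perm X) (π : X → Y) : Prop :=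
  ∀ x : X, Set.InjOn π (stableSet F x)

/-- The shift map on bi-infinite sequences. -/
def shiftE (A : Type*) : Equiv.Perm (ℤ → A) where
  toFun x i := x (i + 1)
  invFun x i := x (i - 1)
  left_inv x := funext fun i => congrArg x (by ring)
  right_inv x := funext fun i => congrArg x (by ring)

/-- The word `w` occurs in the sequence `x`. -/
def OccursIn {A : Type*} {k : ℕ} (w : Fin k → A) (x : ℤ → A) : Prop :=
  ∃ i : ℤ, ∀ j : Fin k, x (i + (j : ℤ)) = w j

/-- A subshift of finite type: the sequences avoiding a finite set of forbidden words. -/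
def IsSFT {A : Type*} (S : Set (ℤ → A)) : Prop :=
  ∃ Fw : Set ((k : ℕ) × (Fin k → A)), Fw.Finite ∧
    S = {x | ∀ w ∈ Fw, ¬ OccursIn w.2 x}

/-- A one-step SFT (vertex shift) with transition rule `T`. -/
def IsOneStepSFTFor {A : Type*} (T : A → A → Prop) (S : Set (ℤ → A)) : Prop :=
  S = {x | ∀ i : ℤ, T (x i) (x (i + 1))}

/-- `S` is invariant under the shift and its inverse. -/
def ShiftInvariant {A : Type*} (S : Set (ℤ → A)) : Prop :=
  (∀ x ∈ S, shiftE A x ∈ S) ∧ (∀ x ∈ S, (shiftE A).symm x ∈ S)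

/-- A factor map from the subshift `(S, σ)` onto the system `(Y, f)`. -/
def IsSubshiftFactorMap {A Y : Type*} [TopologicalSpace A] [MetricSpace Y]
    (S : Set (ℤ → A)) (f : Equiv.Perm Y) (φ : (ℤ → A) → Y) : Prop :=
  ContinuousOn φ S ∧ φ '' S = Set.univ ∧ ∀ x ∈ S, φ (shiftE A x) = f (φ x)

/-- Topological transitivity of the shift restricted to `S`. -/
def SubshiftTransitive {A : Type*} [TopologicalSpace A] (S : Set (ℤ → A)) : Prop :=
  ∀ U V : Set (ℤ → A), IsOpen U → IsOpen V → (U ∩ S).Nonempty → (V ∩ S).Nonempty →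
    ∃ n : ℕ, (((shiftE A) ^ (n : ℤ)) ⁻¹' U ∩ V ∩ S).Nonempty

/-- The stable set of `t` in the subshift `S`: points eventually agreeing with `t`. -/
def shiftStable {A : Type*} (S : Set (ℤ → A)) (t : ℤ → A) : Set (ℤ → A) :=
  {t' ∈ S | ∃ N : ℤ, ∀ i ≥ N, t' i = t i}

/-- A finitely presented system: an expansive system that is a factor of an SFT. -/
def FinitelyPresented {Y : Type*} [MetricSpace Y] (f : Equiv.Perm Y) : Prop :=
  Continuous (⇑f) ∧ Continuous (⇑f.symm) ∧ (∃ c > 0, Expansive f c) ∧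
  ∃ (N : ℕ) (S : Set (ℤ → Fin N)), IsSFT S ∧ ShiftInvariant S ∧ S.Nonempty ∧
    ∃ φ : (ℤ → Fin N) → Y, IsSubshiftFactorMap S f φ

/-! ### Iterates, local stable and unstable sets -/

section Iterates

variable {X Y : Type*}

lemma zpow_add_apply (f : Equiv.Perm X) (m n : ℤ) (x : X) :
    (f ^ (m + n)) x = (f ^ m) ((f ^ n) x) := by
  rw [zpow_add, Equiv.Perm.mul_apply]

lemma zpow_neg_zpow_apply (f : Equiv.Perm X) (m : ℤ) (x : X) : (f ^ (-m)) ((f ^ m) x) = x := by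
  rw [← zpow_add_apply, neg_add_cancel, zpow_zero, Equiv.Perm.one_apply]

lemma semiconj_zpow {F : Equiv.Perm X} {f : Equiv.Perm Y} {π : X → Y}
    (h : Function.Semiconj π F f) (n : ℤ) (x : X) : π ((F ^ n) x) = (f ^ n) (π x) := by
  have h_inv : ∀ x, π (F⁻¹ x) = f⁻¹ (π x) := h.inverses_right F.right_inv f.left_inv
  induction n using Int.induction_on generalizing x with
  | zero => simp
  | succ k ih => rw [zpow_add_one, zpow_add_one, Equiv.Perm.mul_apply, Equiv.Perm.mul_apply, ih, h]
  | pred k ih =>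
    rw [zpow_sub_one, zpow_sub_one, Equiv.Perm.mul_apply, Equiv.Perm.mul_apply, ih, h_inv]

lemma continuous_perm_zpow [TopologicalSpace X] [CompactSpace X] [T2Space X] {f : Equiv.Perm X}
    (hf : Continuous f) (n : ℤ) : Continuous (f ^ n : Equiv.Perm X) := by
  have h_pow : ∀ g : Equiv.Perm X, Continuous g → ∀ k : ℕ, Continuous (g ^ k : Equiv.Perm X) :=
    fun g hg k => by simpa only [Equiv.Perm.coe_pow] using hg.iterate k
  cases n with
  | ofNat k => simpa using h_pow f hf k
  | negSucc k =>
    rw [zpow_negSucc, ← inv_pow]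
    exact h_pow f⁻¹ (Continuous.homeoOfEquivCompactToT2 hf).symm.continuous (k + 1)

lemma exists_forall_abs_le_dist_zpow_lt [MetricSpace X] [CompactSpace X] {f : Equiv.Perm X}
    (hf : Continuous f) (M : ℕ) {ε : ℝ} (hε : 0 < ε) :
    ∃ δ > 0, ∀ p q : X, dist p q < δ → ∀ j : ℤ, |j| ≤ M → dist ((f ^ j) p) ((f ^ j) q) < ε := by
  have h : ∀ᶠ pq in uniformity X, ∀ j ∈ Finset.Icc (-(M : ℤ)) M,
      dist ((f ^ j) pq.1) ((f ^ j) pq.2) < ε :=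
    (Filter.eventually_all_finset _).2 fun j _ =>
      CompactSpace.uniformContinuous_of_continuous (continuous_perm_zpow hf j)
        (Metric.dist_mem_uniformity hε)
  obtain ⟨δ, hδ, H⟩ := Metric.mem_uniformity_dist.1 h
  exact ⟨δ, hδ, fun p q hpq j hj => H hpq j (Finset.mem_Icc.2 (abs_le.1 hj))⟩

end Iterates

section LocalSets

variable {X : Type*} [MetricSpace X] {f : Equiv.Perm X} {a b ε : ℝ} {x y z : X}

lemma mem_Ws_iff : y ∈ Ws f ε x ↔ ∀ k : ℤ, 0 ≤ k → dist ((f ^ k) x) ((f ^ k) y) < ε :=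
  ⟨fun h k hk => by lift k to ℕ using hk; exact h k, fun h n => h n n.cast_nonneg⟩

lemma mem_Wu_iff : y ∈ Wu f ε x ↔ ∀ k : ℤ, k ≤ 0 → dist ((f ^ k) x) ((f ^ k) y) < ε := by
  refine ⟨fun h k hk => ?_, fun h n => h _ (by omega)⟩
  obtain ⟨n, rfl⟩ := Int.exists_eq_neg_ofNat hk
  exact h n

lemma zpow_mem_Ws_zpow_iff {m : ℤ} :
    (f ^ m) y ∈ Ws f ε ((f ^ m) x) ↔ ∀ k, m ≤ k → dist ((f ^ k) x) ((f ^ k) y) < ε := by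
  simp only [mem_Ws_iff, ← zpow_add_apply]
  exact ⟨fun h k hk => by simpa using h (k - m) (by omega), fun h k hk => h _ (by omega)⟩

lemma zpow_mem_Wu_zpow_iff {m : ℤ} :
    (f ^ m) y ∈ Wu f ε ((f ^ m) x) ↔ ∀ k, k ≤ m → dist ((f ^ k) x) ((f ^ k) y) < ε := by
  simp only [mem_Wu_iff, ← zpow_add_apply]
  exact ⟨fun h k hk => by simpa using h (k - m) (by omega), fun h k hk => h _ (by omega)⟩

lemma dist_lt_of_mem_Ws (hy : y ∈ Ws f ε x) : dist x y < ε := by simpa using hy 0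

lemma dist_lt_of_mem_Wu (hy : y ∈ Wu f ε x) : dist x y < ε := by simpa using hy 0

lemma mem_Ws_self (hε : 0 < ε) : x ∈ Ws f ε x := fun _ => by simpa using hε

lemma mem_Wu_self (hε : 0 < ε) : x ∈ Wu f ε x := fun _ => by simpa using hε

lemma Ws_mono (h : a ≤ b) : Ws f a x ⊆ Ws f b x := fun _ hy n => (hy n).trans_le h

lemma Wu_mono (h : a ≤ b) : Wu f a x ⊆ Wu f b x := fun _ hy n => (hy n).trans_le h

lemma mem_Ws_symm (h : y ∈ Ws f ε x) : x ∈ Ws f ε y := fun n => by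
  rw [dist_comm]; exact h n

lemma mem_Wu_symm (h : y ∈ Wu f ε x) : x ∈ Wu f ε y := fun n => by
  rw [dist_comm]; exact h n

lemma mem_Ws_trans (hy : y ∈ Ws f a x) (hz : z ∈ Ws f b y) : z ∈ Ws f (a + b) x := fun n =>
  (dist_triangle _ _ _).trans_lt (add_lt_add (hy n) (hz n))

lemma mem_Wu_trans (hy : y ∈ Wu f a x) (hz : z ∈ Wu f b y) : z ∈ Wu f (a + b) x := fun n =>
  (dist_triangle _ _ _).trans_lt (add_lt_add (hy n) (hz n))

/-- `f` has brackets at every scale: the existence half of canonical coordinates. -/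
def HasBrackets (f : Equiv.Perm X) : Prop :=
  ∀ ε > 0, ∃ δ > 0, ∀ x y : X, dist x y < δ → (Ws f ε x ∩ Wu f ε y).Nonempty

lemma mem_unstableSet_iff :
    y ∈ unstableSet f x ↔ ∀ ε > 0, ∀ᶠ k : ℤ in atBot, dist ((f ^ k) x) ((f ^ k) y) < ε := by
  have h : y ∈ unstableSet f x ↔
      Tendsto (fun k : ℤ => dist ((f ^ k) x) ((f ^ k) y)) atBot (𝓝 0) := by
    rw [← neg_atTop, ← Nat.map_cast_int_atTop]
    exact Iff.rfl
  simp only [h, Metric.tendsto_nhds, Real.dist_0_eq_abs, abs_of_nonneg dist_nonneg, gt_iff_lt]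

lemma zpow_mem_unstableSet (h : y ∈ unstableSet f x) (m : ℤ) :
    (f ^ m) y ∈ unstableSet f ((f ^ m) x) := by
  rw [mem_unstableSet_iff] at h ⊢
  intro ε hε
  simp only [← zpow_add_apply]
  exact (tendsto_atBot_add_const_right atBot m tendsto_id).eventually (h ε hε)

end LocalSets

/-! ### Expansive maps -/

namespace Expansive

variable {X : Type*} [MetricSpace X] {f : Equiv.Perm X} {c ε : ℝ}

lemma mono (he : Expansive f c) {c' : ℝ} (h : c' ≤ c) : Expansive f c' := fun p q hpq =>
  (he p q hpq).imp fun _ hn => h.trans_lt hn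

lemma eq_of_forall_dist_le (he : Expansive f c) {p q : X}
    (h : ∀ n : ℤ, dist ((f ^ n) p) ((f ^ n) q) ≤ c) : p = q := by
  by_contra hpq
  obtain ⟨n, hn⟩ := he p q hpq
  exact (h n).not_gt hn

lemma eq_of_mem_Ws_of_mem_Wu (he : Expansive f c) {p q : X} (hs : q ∈ Ws f c p)
    (hu : q ∈ Wu f c p) : p = q :=
  he.eq_of_forall_dist_le fun n => (le_total 0 n).elim
    (fun hn => (mem_Ws_iff.1 hs n hn).le) fun hn => (mem_Wu_iff.1 hu n hn).le

lemma canonicalCoords (he : Expansive f c) (hc : 0 < c) (h : HasBrackets f) :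
    CanonicalCoords f := by
  refine ⟨c / 2, half_pos hc, fun ε hε hεc => ?_⟩
  obtain ⟨δ, hδ, H⟩ := h ε hε
  refine ⟨δ, hδ, fun x y hxy => ?_⟩
  obtain ⟨z, hzs, hzu⟩ := H x y hxy
  have h2 : ε + ε ≤ c := by linarith
  exact ⟨z, ⟨hzs, hzu⟩, fun w hw => he.eq_of_mem_Ws_of_mem_Wu
    (Ws_mono h2 (mem_Ws_trans (mem_Ws_symm hw.1) hzs))
    (Wu_mono h2 (mem_Wu_trans (mem_Wu_symm hw.2) hzu))⟩

variable [CompactSpace X]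

lemma exists_dist_lt_of_abs_le (he : Expansive f c) (hf : Continuous f) (hε : 0 < ε) :
    ∃ N : ℕ, ∀ p q : X, (∀ n : ℤ, |n| ≤ N → dist ((f ^ n) p) ((f ^ n) q) ≤ c) → dist p q < ε := by
  by_contra! hcon
  choose p q h_close h_far using hcon
  obtain ⟨x, -, φ, hφ, hx⟩ := (isCompact_univ (X := X × X)).tendsto_subseq
    (x := fun n => (p n, q n)) (fun _ => mem_univ _)
  have hx_far : ε ≤ dist x.1 x.2 := ge_of_tendsto ((continuous_dist.tendsto x).comp hx)
    (Eventually.of_forall fun n => h_far (φ n))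
  refine (hε.trans_le hx_far).ne' (dist_eq_zero.2 (he.eq_of_forall_dist_le fun n => ?_))
  have h_cont : Continuous (fun z : X × X => dist ((f ^ n) z.1) ((f ^ n) z.2)) :=
    continuous_dist.comp ((continuous_perm_zpow hf n).prodMap (continuous_perm_zpow hf n))
  refine le_of_tendsto ((h_cont.tendsto x).comp hx) ?_
  filter_upwards [eventually_ge_atTop n.natAbs] with k hk
  refine h_close (φ k) n ?_
  have := hφ.le_apply (x := k)
  rw [Int.abs_eq_natAbs]
  omega

lemma exists_dist_zpow_lt_of_window (he : Expansive f c) (hf : Continuous f) (hε : 0 < ε) :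
    ∃ N : ℕ, ∀ (p q : X) (m : ℤ),
      (∀ k, m - N ≤ k → k ≤ m + N → dist ((f ^ k) p) ((f ^ k) q) ≤ c) →
        dist ((f ^ m) p) ((f ^ m) q) < ε := by
  obtain ⟨N, hN⟩ := he.exists_dist_lt_of_abs_le hf hε
  refine ⟨N, fun p q m h => hN _ _ fun n hn => ?_⟩
  rw [← zpow_add_apply, ← zpow_add_apply]
  exact h _ (by linarith [(abs_le.1 hn).1]) (by linarith [(abs_le.1 hn).2])

lemma exists_mem_Wu_of_dist_lt (he : Expansive f c) (hf : Continuous f) (hε : 0 < ε) :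
    ∃ r > 0, ∀ p q : X, q ∈ Wu f c p → dist p q < r → q ∈ Wu f ε p := by
  obtain ⟨N, hN⟩ := he.exists_dist_zpow_lt_of_window hf hε
  obtain ⟨r, hr, H⟩ := exists_forall_abs_le_dist_zpow_lt hf N hε
  refine ⟨r, hr, fun p q h hd => mem_Wu_iff.2 fun k hk => ?_⟩
  rcases le_total (-(N : ℤ)) k with h1 | h1
  · exact H p q hd k (abs_le.2 ⟨h1, by omega⟩)
  · exact hN p q k fun j _ hj => (mem_Wu_iff.1 h j (by omega)).le

lemma mem_unstableSet (he : Expansive f c) (hf : Continuous f) {x y : X}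
    (h : ∀ᶠ k : ℤ in atBot, dist ((f ^ k) x) ((f ^ k) y) ≤ c) : y ∈ unstableSet f x := by
  refine mem_unstableSet_iff.2 fun ε hε => ?_
  obtain ⟨n, hn⟩ := eventually_atBot.1 h
  obtain ⟨N, hN⟩ := he.exists_dist_zpow_lt_of_window hf hε
  filter_upwards [eventually_le_atBot (n - N)] with k hk
  exact hN x y k fun j _ hj => hn j (by omega)

end Expansive

/-! ### Backward generic points -/

/-- A point whose backward orbit enters every nonempty open set at arbitrarily negative times.
These are the points over which the minimal extension is built. -/
def IsBackwardGeneric {Y : Type*} [TopologicalSpace Y] (f : Equiv.Perm Y) (y : Y) : Prop :=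
  ∀ U : Set Y, IsOpen U → U.Nonempty → ∃ᶠ k : ℤ in atBot, (f ^ k) y ∈ U

namespace IsBackwardGeneric

lemma zpow {Y : Type*} [TopologicalSpace Y] {f : Equiv.Perm Y} {y : Y}
    (hy : IsBackwardGeneric f y) (m : ℤ) : IsBackwardGeneric f ((f ^ m) y) := fun U hU hUn => by
  refine Filter.frequently_atBot.2 fun a => ?_
  obtain ⟨k, hk, hkU⟩ := Filter.frequently_atBot.1 (hy U hU hUn) (a + m)
  exact ⟨k - m, by omega, by rwa [← zpow_add_apply, sub_add_cancel]⟩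

lemma frequently_mem_and_mem {Y : Type*} [MetricSpace Y] {f : Equiv.Perm Y} {y w : Y}
    (hy : IsBackwardGeneric f y) (hw : w ∈ unstableSet f y) {U : Set Y} (hU : IsOpen U)
    (hUn : U.Nonempty) : ∃ᶠ k : ℤ in atBot, (f ^ k) y ∈ U ∧ (f ^ k) w ∈ U := by
  obtain ⟨q, hq⟩ := hUn
  obtain ⟨η, hη, h_ball⟩ := Metric.isOpen_iff.1 hU q hq
  have h_freq := hy _ (Metric.isOpen_ball (x := q) (ε := η / 2))
    (Metric.nonempty_ball.2 (half_pos hη))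
  refine (h_freq.and_eventually (mem_unstableSet_iff.1 hw _ (half_pos hη))).mono
    fun k ⟨hyq, hyw⟩ => ⟨h_ball (Metric.ball_subset_ball (half_le_self hη.le) hyq), h_ball ?_⟩
  calc dist ((f ^ k) w) q ≤ dist ((f ^ k) y) ((f ^ k) w) + dist ((f ^ k) y) q :=
        dist_triangle_left _ _ _
    _ < η / 2 + η / 2 := add_lt_add hyw hyq
    _ = η := add_halves η

lemma of_mem_unstableSet {Y : Type*} [MetricSpace Y] {f : Equiv.Perm Y} {y w : Y}
    (hy : IsBackwardGeneric f y) (hw : w ∈ unstableSet f y) : IsBackwardGeneric f w :=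
  fun _ hU hUn => (hy.frequently_mem_and_mem hw hU hUn).mono fun _ => And.right

lemma image {X Y : Type*} [TopologicalSpace X] [TopologicalSpace Y] {F : Equiv.Perm X}
    {f : Equiv.Perm Y} {π : X → Y} (hπ : Continuous π) (h_surj : Function.Surjective π)
    (h_conj : Function.Semiconj π F f) {x : X} (hx : IsBackwardGeneric F x) :
    IsBackwardGeneric f (π x) := fun U hU hUn =>
  (hx _ (hU.preimage hπ) (hUn.preimage h_surj)).mono fun k hk => by
    rwa [mem_preimage, semiconj_zpow h_conj] at hk

end IsBackwardGeneric

namespace TopTransitive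

variable {Y : Type*} [MetricSpace Y] [CompactSpace Y] {f : Equiv.Perm Y}

lemma frequently_atBot (ht : TopTransitive f) (hf : Continuous f) {U V : Set Y} (hU : IsOpen U)
    (hV : IsOpen V) (hUn : U.Nonempty) (hVn : V.Nonempty) :
    ∃ᶠ k : ℤ in atBot, ((f ^ k) ⁻¹' U ∩ V).Nonempty := by
  refine Filter.frequently_atBot.2 fun a => ?_
  obtain ⟨n, w, hwV, hwU⟩ := ht V ((f ^ a) ⁻¹' U) hV (hU.preimage (continuous_perm_zpow hf a))
    hVn (hUn.preimage (f ^ a).surjective)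
  refine ⟨a - n, by omega, (f ^ (n : ℤ)) w, ?_, hwV⟩
  rwa [mem_preimage, ← zpow_add_apply, sub_add_cancel]

lemma dense_isBackwardGeneric (ht : TopTransitive f) (hf : Continuous f) :
    Dense {y | IsBackwardGeneric f y} := by
  let B := TopologicalSpace.countableBasis Y
  have hB := TopologicalSpace.isBasis_countableBasis Y
  have : Countable B := (TopologicalSpace.countable_countableBasis Y).to_subtype
  have h_dense : Dense (⋂ p : B × ℤ, ⋃ k ∈ Iic p.2, (f ^ k) ⁻¹' (p.1 : Set Y)) := by
    refine dense_iInter_of_isOpen (fun p => isOpen_biUnion fun k _ =>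
      (hB.isOpen p.1.2).preimage (continuous_perm_zpow hf k)) fun p => ?_
    refine dense_iff_inter_open.2 fun V hV hVn => ?_
    obtain ⟨k, hk, v, hv, hvV⟩ := Filter.frequently_atBot.1 (ht.frequently_atBot hf
      (hB.isOpen p.1.2) hV (TopologicalSpace.nonempty_of_mem_countableBasis p.1.2) hVn) p.2
    exact ⟨v, hvV, mem_biUnion hk hv⟩
  refine h_dense.mono fun y hy U hU ⟨x, hx⟩ => Filter.frequently_atBot.2 fun a => ?_
  obtain ⟨W, hW, -, hWU⟩ := hB.exists_subset_of_mem_open hx hU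
  obtain ⟨k, hk, hkW⟩ := mem_iUnion₂.1 (mem_iInter.1 hy (⟨W, hW⟩, a))
  exact ⟨k, hk, hWU hkW⟩

end TopTransitive

lemma TopTransitive.of_isInducing {X Y : Type*} [MetricSpace X] [MetricSpace Y]
    {F : Equiv.Perm X} {f : Equiv.Perm Y} (ht : TopTransitive f) (hf : Continuous f) {π : X → Y}
    (hπ : IsInducing π) (h_dense : DenseRange π) (h_conj : Function.Semiconj π F f) :
    TopTransitive F := by
  intro U V hU hV hUn hVn
  obtain ⟨U, hU', rfl⟩ := hπ.isOpen_iff.1 hU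
  obtain ⟨V, hV', rfl⟩ := hπ.isOpen_iff.1 hV
  obtain ⟨n, h_ne⟩ := ht U V hU' hV' (nonempty_of_nonempty_preimage hUn)
    (nonempty_of_nonempty_preimage hVn)
  have h_cont : Continuous (f ^ (n : ℤ) : Equiv.Perm Y) := by
    rw [zpow_natCast, Equiv.Perm.coe_pow]
    exact hf.iterate n
  obtain ⟨x, hxU, hxV⟩ := h_dense.exists_mem_open ((hU'.preimage h_cont).inter hV') h_ne
  exact ⟨n, x, by rwa [mem_preimage, mem_preimage, semiconj_zpow h_conj], hxV⟩

/-! ### Holonomies between unstable plaques -/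

section Holonomy

variable {Y : Type*} [MetricSpace Y] {f : Equiv.Perm Y} {ρ r δ η ε : ℝ} {a b : Y}

/-- Holonomy from the plaque of `a` to the plaque of `b`: every point of `Wu f ρ a` within `η` of
`a` slides along a `δ`-stable set into `Wu f ρ b`. -/
def HasHolonomy (f : Equiv.Perm Y) (ρ δ η : ℝ) (a b : Y) : Prop :=
  ∀ u ∈ Wu f ρ a, dist a u < η → (Ws f δ u ∩ Wu f ρ b).Nonempty

/-- `a` and `b` are `ε`-close together with their unstable plaques. The holonomies are only asked
for up to distance `r - 2 * ε`, a loss which makes the relation compatible with composition. -/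
structure PlaqueClose (f : Equiv.Perm Y) (ρ r ε : ℝ) (a b : Y) : Prop where
  dist_lt : dist a b < ε
  forward : HasHolonomy f ρ ε (r - 2 * ε) a b
  backward : HasHolonomy f ρ ε (r - 2 * ε) b a

/-- `a` and `b` are `ε`-close in the plaque sense at all times up to `1 / ε` in absolute value.
These relations are the entourages of the metric whose completion is the minimal extension. -/
def OrbitClose (f : Equiv.Perm Y) (ρ r ε : ℝ) (a b : Y) : Prop :=
  ∀ n : ℤ, |(n : ℝ)| * ε ≤ 1 → PlaqueClose f ρ r ε ((f ^ n) a) ((f ^ n) b)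

namespace HasHolonomy

lemma refl (hδ : 0 < δ) (a : Y) : HasHolonomy f ρ δ η a a :=
  fun u hu _ => ⟨u, mem_Ws_self hδ, hu⟩

lemma mono {δ' η' : ℝ} (h : HasHolonomy f ρ δ η a b) (hδ : δ ≤ δ') (hη : η' ≤ η) :
    HasHolonomy f ρ δ' η' a b := fun u hu hd =>
  (h u hu (hd.trans_le hη)).mono (inter_subset_inter_left _ (Ws_mono hδ))

lemma trans {δ₁ δ₂ : ℝ} {c : Y} (hab : HasHolonomy f ρ δ₁ η a b)
    (hbc : HasHolonomy f ρ δ₂ (dist b a + η + δ₁) b c) : HasHolonomy f ρ (δ₁ + δ₂) η a c := by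
  intro u hu hau
  obtain ⟨v, huv, hv⟩ := hab u hu hau
  have hbv : dist b v < dist b a + η + δ₁ :=
    calc dist b v ≤ dist b a + dist a u + dist u v := dist_triangle4 _ _ _ _
      _ < dist b a + η + δ₁ := by linarith [dist_lt_of_mem_Ws huv]
  obtain ⟨w, hvw, hw⟩ := hbc v hv hbv
  exact ⟨w, mem_Ws_trans huv hvw, hw⟩

end HasHolonomy

namespace PlaqueClose

lemma refl (hε : 0 < ε) (a : Y) : PlaqueClose f ρ r ε a a :=
  ⟨by simpa using hε, .refl hε a, .refl hε a⟩

lemma symm (h : PlaqueClose f ρ r ε a b) : PlaqueClose f ρ r ε b a :=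
  ⟨by simpa only [dist_comm] using h.dist_lt, h.backward, h.forward⟩

lemma mono {ε' : ℝ} (h : PlaqueClose f ρ r ε a b) (hε : ε ≤ ε') : PlaqueClose f ρ r ε' a b :=
  ⟨h.dist_lt.trans_le hε, h.forward.mono hε (by linarith), h.backward.mono hε (by linarith)⟩

lemma trans {ε₁ ε₂ : ℝ} {c : Y} (hab : PlaqueClose f ρ r ε₁ a b) (hbc : PlaqueClose f ρ r ε₂ b c) :
    PlaqueClose f ρ r (ε₁ + ε₂) a c where
  dist_lt := (dist_triangle a b c).trans_lt (add_lt_add hab.dist_lt hbc.dist_lt)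
  forward := (hab.forward.mono le_rfl (by linarith [dist_nonneg.trans_lt hbc.dist_lt])).trans
    (hbc.forward.mono le_rfl (by linarith [hab.symm.dist_lt]))
  backward := by
    rw [add_comm ε₁]
    exact (hbc.backward.mono le_rfl (by linarith [dist_nonneg.trans_lt hab.dist_lt])).trans
      (hab.backward.mono le_rfl (by linarith [hbc.dist_lt]))

end PlaqueClose

namespace OrbitClose

lemma plaqueClose (h : OrbitClose f ρ r ε a b) : PlaqueClose f ρ r ε a b := by
  simpa using h 0

lemma pos (h : OrbitClose f ρ r ε a b) : 0 < ε := dist_nonneg.trans_lt h.plaqueClose.dist_lt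

lemma refl (hε : 0 < ε) (a : Y) : OrbitClose f ρ r ε a a := fun _ _ => .refl hε _

lemma symm (h : OrbitClose f ρ r ε a b) : OrbitClose f ρ r ε b a := fun n hn => (h n hn).symm

lemma mono {ε' : ℝ} (h : OrbitClose f ρ r ε a b) (hε : ε ≤ ε') : OrbitClose f ρ r ε' a b :=
  fun n hn => (h n ((mul_le_mul_of_nonneg_left hε (abs_nonneg _)).trans hn)).mono hε

lemma trans {ε₁ ε₂ : ℝ} {c : Y} (hab : OrbitClose f ρ r ε₁ a b) (hbc : OrbitClose f ρ r ε₂ b c) :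
    OrbitClose f ρ r (ε₁ + ε₂) a c := by
  have hε₁ := hab.pos
  have hε₂ := hbc.pos
  exact fun n hn => (hab n ((by gcongr; linarith : _ ≤ _).trans hn)).trans
    (hbc n ((by gcongr; linarith : _ ≤ _).trans hn))

lemma zpow (m : ℤ) (h : OrbitClose f ρ r (ε / (1 + |(m : ℝ)| * ε)) a b) (hε : 0 < ε) :
    OrbitClose f ρ r ε ((f ^ m) a) ((f ^ m) b) := by
  have h_one_le : 1 ≤ 1 + |(m : ℝ)| * ε := le_add_of_nonneg_right (by positivity)
  intro n hn
  rw [← zpow_add_apply, ← zpow_add_apply]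
  refine (h (n + m) ?_).mono (div_le_self hε.le h_one_le)
  rw [← mul_div_assoc, div_le_one (by positivity)]
  calc |((n + m : ℤ) : ℝ)| * ε ≤ (|(n : ℝ)| + |(m : ℝ)|) * ε := by
        push_cast
        gcongr
        exact abs_add_le _ _
    _ ≤ 1 + |(m : ℝ)| * ε := by linarith

-- For `ε > 1` only the time `0` counts, and for `r < 2 * ε` the holonomy conditions are void.
lemma of_lt_dist (h1 : 1 < ε) (hr : r ≤ ε) (hab : dist a b < ε) : OrbitClose f ρ r ε a b := by
  have h_void : ∀ p q : Y, HasHolonomy f ρ ε (r - 2 * ε) p q := fun p q u _ hu => by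
    linarith [dist_nonneg (x := p) (y := u)]
  intro n hn
  have hn0 : n = 0 := by
    by_contra h
    have h_abs : (1 : ℝ) ≤ |(n : ℝ)| := by exact_mod_cast Int.one_le_abs h
    nlinarith
  subst hn0
  exact ⟨by simpa using hab, h_void _ _, h_void _ _⟩

end OrbitClose

lemma abs_le_natCeil_of_mul_le_one {n : ℤ} (hε : 0 < ε) (hn : |(n : ℝ)| * ε ≤ 1) :
    |n| ≤ ⌈1 / ε⌉₊ := by
  exact_mod_cast ((le_div_iff₀ hε).2 hn).trans (Nat.le_ceil (1 / ε))

/-- `ρ` is the size of the unstable plaques, and within distance `r` of its centre a plaque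
is so small that plaques can be concatenated twice without exceeding size `ρ`. -/
structure IsPlaqueScale (f : Equiv.Perm Y) (ρ r : ℝ) : Prop where
  continuous : Continuous f
  expansive : Expansive f (2 * ρ)
  r_pos : 0 < r
  r_le : r ≤ ρ
  mem_Wu : ∀ ⦃p q : Y⦄, q ∈ Wu f ρ p → dist p q < r → q ∈ Wu f (ρ / 4) p

lemma exists_isPlaqueScale [CompactSpace Y] {c : ℝ} (hf : Continuous f) (hc : 0 < c)
    (he : Expansive f c) : ∃ ρ r, IsPlaqueScale f ρ r := by
  obtain ⟨r, hr, H⟩ := he.exists_mem_Wu_of_dist_lt hf (ε := c / 2 / 4) (by positivity)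
  exact ⟨c / 2, min r (c / 2), hf, he.mono (by linarith), lt_min hr (half_pos hc),
    min_le_right _ _, fun p q hq hd =>
      H p q (Wu_mono (by linarith) hq) (hd.trans_le (min_le_left _ _))⟩

namespace IsPlaqueScale

lemma rho_pos (hs : IsPlaqueScale f ρ r) : 0 < ρ := hs.r_pos.trans_le hs.r_le

lemma hasHolonomy_of_mem_Wu (hs : IsPlaqueScale f ρ r) (hδ : 0 < δ) (hη : η ≤ r)
    (h : b ∈ Wu f (ρ / 4) a) : HasHolonomy f ρ δ η a b := fun u hu hd =>
  ⟨u, mem_Ws_self hδ, Wu_mono (by linarith [hs.rho_pos])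
    (mem_Wu_trans (mem_Wu_symm h) (hs.mem_Wu hu (hd.trans_le hη)))⟩

variable [CompactSpace Y]

/- Backward iteration contracts plaques, so the given holonomy only has to match a tiny plaque at
time `s`; forward iteration contracts the stable sets along which it slides. -/
lemma exists_hasHolonomy_zpow (hs : IsPlaqueScale f ρ r) (hη : 0 < η) (hηr : η ≤ r / 4)
    (hε : 0 < ε) :
    ∃ N : ℕ, ∀ (a b : Y) (s t : ℤ), s + N ≤ t →
      HasHolonomy f ρ (r / 4) η ((f ^ s) a) ((f ^ s) b) →
      (∀ j ∈ Icc s t, dist ((f ^ j) a) ((f ^ j) b) < r / 4) →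
        HasHolonomy f ρ ε r ((f ^ t) a) ((f ^ t) b) := by
  obtain ⟨N₁, h_past⟩ := hs.expansive.exists_dist_zpow_lt_of_window hs.continuous hη
  obtain ⟨N₂, h_future⟩ := hs.expansive.exists_dist_zpow_lt_of_window hs.continuous hε
  have hrρ := hs.r_le
  refine ⟨max N₁ N₂, fun a b s t hst h_hol h_close z hz hzr => ?_⟩
  obtain ⟨x, rfl⟩ := (f ^ t).surjective z
  have hax := zpow_mem_Wu_zpow_iff.1 (hs.mem_Wu hz hzr)
  have hax_s : dist ((f ^ s) a) ((f ^ s) x) < η :=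
    h_past a x s fun k _ hk => (hax k (by omega)).le.trans (by linarith)
  obtain ⟨z', hxz', hbz'⟩ := h_hol ((f ^ s) x)
    (zpow_mem_Wu_zpow_iff.2 fun k hk => (hax k (by omega)).trans (by linarith)) hax_s
  obtain ⟨x', rfl⟩ := (f ^ s).surjective z'
  have hxx' := zpow_mem_Ws_zpow_iff.1 hxz'
  have hbx'_s : dist ((f ^ s) b) ((f ^ s) x') < r := by
    have hab_s := h_close s ⟨le_rfl, by omega⟩
    rw [dist_comm] at hab_s
    linarith [dist_triangle4 ((f ^ s) b) ((f ^ s) a) ((f ^ s) x) ((f ^ s) x'), hxx' s le_rfl]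
  have hbx' := zpow_mem_Wu_zpow_iff.1 (hs.mem_Wu hbz' hbx'_s)
  refine ⟨(f ^ t) x', zpow_mem_Ws_zpow_iff.2 fun k hk => ?_, zpow_mem_Wu_zpow_iff.2 fun k hk => ?_⟩
  · exact h_future x x' k fun j hj _ => (hxx' j (by omega)).le.trans (by linarith)
  · rcases le_total k s with hks | hsk
    · exact (hbx' k hks).trans (by linarith)
    · have hab_k := h_close k ⟨hsk, hk⟩
      rw [dist_comm] at hab_k
      linarith [dist_triangle4 ((f ^ k) b) ((f ^ k) a) ((f ^ k) x) ((f ^ k) x'), hax k hk,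
        hxx' k hsk]

lemma exists_orbitClose_of_hasHolonomy (hs : IsPlaqueScale f ρ r) (hη : 0 < η) (hηr : η ≤ r / 4)
    (hε : 0 < ε) :
    ∃ M : ℕ, ∃ γ > 0, ∀ (a b : Y) (s : ℤ), s ≤ -M →
      HasHolonomy f ρ (r / 4) η ((f ^ s) a) ((f ^ s) b) →
      HasHolonomy f ρ (r / 4) η ((f ^ s) b) ((f ^ s) a) →
      (∀ j ∈ Icc s M, dist ((f ^ j) a) ((f ^ j) b) < γ) → OrbitClose f ρ r ε a b := by
  obtain ⟨N, hN⟩ := hs.exists_hasHolonomy_zpow hη hηr hε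
  refine ⟨N + ⌈1 / ε⌉₊, min (r / 4) ε, lt_min (by linarith [hs.r_pos]) hε,
    fun a b s hsM hab hba h_close n hn => ?_⟩
  have hn' := abs_le.1 (abs_le_natCeil_of_mul_le_one hε hn)
  push_cast at hsM h_close
  have h_close_r : ∀ j ∈ Icc s n, dist ((f ^ j) a) ((f ^ j) b) < r / 4 := fun j hj =>
    (h_close j ⟨hj.1, by linarith [hj.2]⟩).trans_le (min_le_left _ _)
  exact ⟨(h_close n ⟨by omega, by omega⟩).trans_le (min_le_right _ _),
    (hN a b s n (by omega) hab h_close_r).mono le_rfl (by linarith),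
    (hN b a s n (by omega) hba (by simpa only [dist_comm] using h_close_r)).mono le_rfl
      (by linarith)⟩

lemma exists_orbitClose_of_mem_Wu (hs : IsPlaqueScale f ρ r) (hε : 0 < ε) :
    ∃ τ > 0, ∀ p q : Y, q ∈ Wu f τ p → OrbitClose f ρ r ε p q := by
  have hr := hs.r_pos
  obtain ⟨M, γ, hγ, H⟩ := hs.exists_orbitClose_of_hasHolonomy (η := r / 4) (by linarith) le_rfl hε
  obtain ⟨κ, hκ, h_mod⟩ := exists_forall_abs_le_dist_zpow_lt hs.continuous M hγ
  refine ⟨min κ (ρ / 4), lt_min hκ (by linarith [hs.rho_pos]), fun p q hq => ?_⟩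
  have hq_past : (f ^ (-(M : ℤ))) q ∈ Wu f (ρ / 4) ((f ^ (-(M : ℤ))) p) :=
    zpow_mem_Wu_zpow_iff.2 fun k hk =>
      (mem_Wu_iff.1 hq k (by omega)).trans_le (min_le_right _ _)
  exact H p q (-M) le_rfl (hs.hasHolonomy_of_mem_Wu (by linarith) (by linarith) hq_past)
    (hs.hasHolonomy_of_mem_Wu (by linarith) (by linarith) (mem_Wu_symm hq_past))
    fun j hj => h_mod p q ((dist_lt_of_mem_Wu hq).trans_le (min_le_left _ _)) j (abs_le.2 hj)

lemma exists_orbitClose_of_mem_Ws (hs : IsPlaqueScale f ρ r) (hε : 0 < ε) :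
    ∃ δ > 0, ∀ p q : Y, OrbitClose f ρ r δ p q → q ∈ Ws f δ p →
      ∀ k : ℤ, 0 ≤ k → OrbitClose f ρ r ε ((f ^ k) p) ((f ^ k) q) := by
  have hr := hs.r_pos
  obtain ⟨M, γ, hγ, H⟩ := hs.exists_orbitClose_of_hasHolonomy (η := r / 4) (by linarith) le_rfl hε
  have hM : (0 : ℝ) < M + 1 := by positivity
  obtain ⟨δ, hδ, hδγ, hδr, hδM⟩ : ∃ δ > 0, δ ≤ γ ∧ δ ≤ r / 4 ∧ δ ≤ 1 / (M + 1) :=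
    ⟨min γ (min (r / 4) (1 / (M + 1))), by positivity, min_le_left _ _,
      (min_le_right _ _).trans (min_le_left _ _), (min_le_right _ _).trans (min_le_right _ _)⟩
  have h_time : ∀ j : ℤ, |j| ≤ M → |(j : ℝ)| * δ ≤ 1 := fun j hj => by
    have hj' : |(j : ℝ)| ≤ M := by exact_mod_cast hj
    rw [le_div_iff₀ hM] at hδM
    nlinarith
  refine ⟨δ, hδ, fun p q hpq hq k hk => ?_⟩
  have h_past := hpq (-M) (h_time _ (by simp))
  refine H _ _ (-M - k) (by omega) ?_ ?_ fun j hj => ?_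
  · rw [← zpow_add_apply, ← zpow_add_apply, sub_add_cancel]
    exact h_past.forward.mono hδr (by linarith)
  · rw [← zpow_add_apply, ← zpow_add_apply, sub_add_cancel]
    exact h_past.backward.mono hδr (by linarith)
  · rw [← zpow_add_apply, ← zpow_add_apply]
    refine lt_of_lt_of_le ?_ hδγ
    rcases le_total 0 (j + k) with h0 | h0
    · exact mem_Ws_iff.1 hq _ h0
    · exact (hpq (j + k) (h_time _ (abs_le.2 ⟨by linarith [hj.1], by omega⟩))).dist_lt

lemma exists_bracket (hs : IsPlaqueScale f ρ r) (hε : 0 < ε) :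
    ∃ δ > 0, ∀ p q : Y, OrbitClose f ρ r δ p q → ∃ w ∈ unstableSet f q,
      (∀ k : ℤ, 0 ≤ k → OrbitClose f ρ r ε ((f ^ k) p) ((f ^ k) w)) ∧
      ∀ k : ℤ, k ≤ 0 → OrbitClose f ρ r ε ((f ^ k) q) ((f ^ k) w) := by
  have hρ := hs.rho_pos
  obtain ⟨δ', hδ', h_stable⟩ := hs.exists_orbitClose_of_mem_Ws hε
  obtain ⟨τ, hτ, h_unstable⟩ := hs.exists_orbitClose_of_mem_Wu
    (lt_min hε (half_pos hδ') : 0 < min ε (δ' / 2))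
  obtain ⟨r', hr', h_small⟩ := hs.expansive.exists_mem_Wu_of_dist_lt hs.continuous hτ
  obtain ⟨δ, hδ, hδδ', hδr', hδr⟩ : ∃ δ > 0, δ ≤ δ' / 2 ∧ δ ≤ r' / 2 ∧ δ ≤ r / 4 :=
    ⟨min (δ' / 2) (min (r' / 2) (r / 4)), by have := hs.r_pos; positivity, min_le_left _ _,
      (min_le_right _ _).trans (min_le_left _ _), (min_le_right _ _).trans (min_le_right _ _)⟩
  refine ⟨δ, hδ, fun p q hpq => ?_⟩
  obtain ⟨w, hpw, hqw⟩ := hpq.plaqueClose.forward p (mem_Wu_self hρ)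
    (by rw [dist_self]; linarith [hs.r_pos])
  have hqw_dist : dist q w < r' := by
    linarith [dist_triangle_left q w p, dist_lt_of_mem_Ws hpw, hpq.plaqueClose.dist_lt]
  have hqw_small : w ∈ Wu f τ q := h_small q w (Wu_mono (by linarith) hqw) hqw_dist
  have hpw_close : OrbitClose f ρ r δ' p w :=
    (hpq.trans (h_unstable q w hqw_small)).mono (by linarith [min_le_right ε (δ' / 2)])
  refine ⟨w, hs.expansive.mem_unstableSet hs.continuous ?_, fun k hk => ?_, fun k hk => ?_⟩
  · filter_upwards [eventually_le_atBot 0] with k hk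
    linarith [mem_Wu_iff.1 hqw k hk]
  · exact h_stable p w hpw_close (Ws_mono (by linarith) hpw) k hk
  · exact (h_unstable _ _ (zpow_mem_Wu_zpow_iff.2 fun j hj =>
      mem_Wu_iff.1 hqw_small j (hj.trans hk))).mono (min_le_left _ _)

end IsPlaqueScale

end Holonomy

/-! ### Rectangles -/

/-- At every scale the space has a finite cover by closed rectangles: closed sets in which any two
points have a bracket (in the ambient space). This is all that is used of the presentation of `f` as
a factor of a subshift of finite type. -/
def HasRectangleCovers {Y : Type*} [MetricSpace Y] (f : Equiv.Perm Y) : Prop :=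
  ∀ ε > 0, ∃ 𝒦 : Set (Set Y), 𝒦.Finite ∧ ⋃₀ 𝒦 = univ ∧
    ∀ K ∈ 𝒦, IsClosed K ∧ ∀ p ∈ K, ∀ q ∈ K, (Ws f ε p ∩ Wu f ε q).Nonempty

section Subshift

variable {A : Type*} {S : Set (ℤ → A)}

lemma shiftE_zpow_apply (n : ℤ) (x : ℤ → A) (i : ℤ) : (shiftE A ^ n) x i = x (i + n) := by
  induction n using Int.induction_on generalizing x i with
  | zero => simp
  | succ k ih =>
    rw [zpow_add_one, Equiv.Perm.mul_apply, ih, ← add_assoc]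
    rfl
  | pred k ih =>
    rw [zpow_sub_one, Equiv.Perm.mul_apply, ih, ← add_sub_assoc]
    rfl

lemma IsSFT.exists_splice_mem (hS : IsSFT S) :
    ∃ l : ℕ, ∀ s ∈ S, ∀ t ∈ S, (∀ j : ℤ, 0 ≤ j → j < l → s j = t j) →
      (fun j : ℤ => if j < 0 then t j else s j) ∈ S := by
  obtain ⟨Fw, h_fin, rfl⟩ := hS
  obtain ⟨l, hl⟩ := (h_fin.image Sigma.fst).bddAbove
  refine ⟨l, fun s hs t ht h_agree w hw ⟨i, hi⟩ => ?_⟩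
  have hwl : w.1 ≤ l := hl ⟨w, hw, rfl⟩
  rcases lt_or_ge i 0 with hi0 | hi0
  · refine ht w hw ⟨i, fun j => ?_⟩
    rw [← hi j]
    dsimp only
    split_ifs with h_neg
    · rfl
    · exact (h_agree _ (by omega) (by omega)).symm
  · refine hs w hw ⟨i, fun j => ?_⟩
    simpa only [if_neg (show ¬ i + (j : ℤ) < 0 by omega)] using hi j

variable [TopologicalSpace A]

lemma IsSFT.isClosed [DiscreteTopology A] (hS : IsSFT S) : IsClosed S := by
  obtain ⟨Fw, -, rfl⟩ := hS
  have h_eq : {x : ℤ → A | ∀ w ∈ Fw, ¬ OccursIn w.2 x} =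
      ⋂ w ∈ Fw, ⋂ i : ℤ, {x | ∀ j : Fin w.1, x (i + (j : ℤ)) = w.2 j}ᶜ := by
    ext x; simp [OccursIn]
  rw [h_eq]
  refine isClosed_biInter fun w _ => isClosed_iInter fun i => isClosed_compl_iff.2 ?_
  rw [ofPred_forall]
  exact isOpen_iInter_of_finite fun j =>
    (isOpen_discrete ({w.2 j} : Set A)).preimage (continuous_apply (A := fun _ : ℤ => A) (i + j))

lemma exists_dist_lt_of_agree [T2Space A] {Y : Type*} [MetricSpace Y] (hS : IsCompact S)
    {φ : (ℤ → A) → Y} (hφ : ContinuousOn φ S) {ε : ℝ} (hε : 0 < ε) :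
    ∃ k : ℕ, ∀ s ∈ S, ∀ t ∈ S, (∀ j : ℤ, |j| ≤ k → s j = t j) → dist (φ s) (φ t) < ε := by
  let far : Set ((ℤ → A) × (ℤ → A)) := (S ×ˢ S) ∩ {p | ε ≤ dist (φ p.1) (φ p.2)}
  let differ (k : ℕ) : Set ((ℤ → A) × (ℤ → A)) := ⋃ j ∈ {j : ℤ | |j| ≤ k}, {p | p.1 j ≠ p.2 j}
  have h_far : IsCompact far := by
    have h_dist : ContinuousOn (fun p : (ℤ → A) × (ℤ → A) => dist (φ p.1) (φ p.2)) (S ×ˢ S) :=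
      continuous_dist.comp_continuousOn ((hφ.comp continuousOn_fst mapsTo_fst_prod).prodMk
        (hφ.comp continuousOn_snd mapsTo_snd_prod))
    exact (hS.prod hS).of_isClosed_subset (h_dist.preimage_isClosed_of_isClosed
      (hS.prod hS).isClosed isClosed_Ici) inter_subset_left
  have h_open : ∀ k, IsOpen (differ k) := fun k => isOpen_biUnion fun j _ =>
    isOpen_ne_fun ((continuous_apply j).comp continuous_fst)
      ((continuous_apply j).comp continuous_snd)
  have h_cover : far ⊆ ⋃ k, differ k := by
    rintro ⟨s, t⟩ ⟨-, hst⟩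
    obtain ⟨j, hj⟩ := Function.ne_iff.1 (show s ≠ t by rintro rfl; simp [hε.not_ge] at hst)
    exact mem_iUnion.2 ⟨j.natAbs, mem_biUnion (show |j| ≤ _ by rw [Int.natCast_natAbs]) hj⟩
  have h_mono : Monotone differ := fun k k' hk => biUnion_subset_biUnion_left fun j hj =>
    (show |j| ≤ k from hj).trans (by exact_mod_cast hk)
  obtain ⟨k, hk⟩ := h_far.elim_directed_cover differ h_open h_cover h_mono.directed_le
  refine ⟨k, fun s hs t ht h_agree => lt_of_not_ge fun h => ?_⟩
  obtain ⟨j, hj, hj'⟩ := mem_iUnion₂.1 (hk (show (s, t) ∈ far from ⟨⟨hs, ht⟩, h⟩))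
  exact hj' (h_agree j hj)

lemma IsSubshiftFactorMap.map_shiftE_zpow {Y : Type*} [MetricSpace Y] {f : Equiv.Perm Y}
    {φ : (ℤ → A) → Y} (hφ : IsSubshiftFactorMap S f φ) (hS : ShiftInvariant S) (n : ℤ)
    {s : ℤ → A} (hs : s ∈ S) :
    (shiftE A ^ n) s ∈ S ∧ φ ((shiftE A ^ n) s) = (f ^ n) (φ s) := by
  let σ : Equiv.Perm S := (shiftE A).subtypePerm fun x =>
    ⟨fun h => by simpa using hS.2 _ h, hS.1 x⟩
  have h_coe : ((σ ^ n) ⟨s, hs⟩ : ℤ → A) = (shiftE A ^ n) s := by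
    rw [Equiv.Perm.subtypePerm_zpow]
    rfl
  have h_conj : Function.Semiconj (fun x : S => φ x) σ f := fun x => hφ.2.2 x x.2
  rw [← h_coe]
  exact ⟨((σ ^ n) ⟨s, hs⟩).2, semiconj_zpow h_conj n ⟨s, hs⟩⟩

lemma IsSubshiftFactorMap.exists_dist_zpow_lt_of_agree [T2Space A] {Y : Type*} [MetricSpace Y]
    {f : Equiv.Perm Y} {φ : (ℤ → A) → Y} (hφ : IsSubshiftFactorMap S f φ) (hS : IsCompact S)
    (h_inv : ShiftInvariant S) {ε : ℝ} (hε : 0 < ε) :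
    ∃ k : ℕ, ∀ n : ℤ, ∀ s ∈ S, ∀ t ∈ S, (∀ j, n - k ≤ j → j ≤ n + k → s j = t j) →
      dist ((f ^ n) (φ s)) ((f ^ n) (φ t)) < ε := by
  obtain ⟨k, hk⟩ := exists_dist_lt_of_agree hS hφ.1 hε
  refine ⟨k, fun n s hs t ht hst => ?_⟩
  obtain ⟨hs', hφs⟩ := hφ.map_shiftE_zpow h_inv n hs
  obtain ⟨ht', hφt⟩ := hφ.map_shiftE_zpow h_inv n ht
  rw [← hφs, ← hφt]
  refine hk _ hs' _ ht' fun j hj => ?_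
  rw [shiftE_zpow_apply, shiftE_zpow_apply]
  exact hst _ (by linarith [(abs_le.1 hj).1]) (by linarith [(abs_le.1 hj).2])

lemma IsSubshiftFactorMap.hasRectangleCovers [DiscreteTopology A] [Finite A] {Y : Type*}
    [MetricSpace Y] {f : Equiv.Perm Y} {φ : (ℤ → A) → Y} (hφ : IsSubshiftFactorMap S f φ)
    (hS : IsSFT S) (h_inv : ShiftInvariant S) : HasRectangleCovers f := by
  intro ε hε
  obtain ⟨l, hl⟩ := hS.exists_splice_mem
  obtain ⟨k, h_near⟩ := hφ.exists_dist_zpow_lt_of_agree hS.isClosed.isCompact h_inv hε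
  let m : ℤ := l + k
  let cylinder (w : Icc (-m) m → A) : Set (ℤ → A) := S ∩ {s | ∀ j : Icc (-m) m, s j = w j}
  refine ⟨range fun w => φ '' cylinder w, finite_range _, ?_, ?_⟩
  · refine eq_univ_of_forall fun y => ?_
    obtain ⟨s, hs, rfl⟩ : y ∈ φ '' S := hφ.2.1 ▸ mem_univ y
    exact ⟨_, ⟨fun j => s j, rfl⟩, s, ⟨hs, fun _ => rfl⟩, rfl⟩
  rintro _ ⟨w, rfl⟩
  refine ⟨?_, ?_⟩
  · have h_closed : IsClosed (cylinder w) := hS.isClosed.inter (by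
      rw [ofPred_forall]
      exact isClosed_iInter fun j => isClosed_singleton.preimage (continuous_apply (j : ℤ)))
    exact (h_closed.isCompact.image_of_continuousOn (hφ.1.mono inter_subset_left)).isClosed
  · rintro _ ⟨s, ⟨hs, hsw⟩, rfl⟩ _ ⟨t, ⟨ht, htw⟩, rfl⟩
    have hst : ∀ j, -m ≤ j → j ≤ m → s j = t j := fun j h1 h2 =>
      (hsw ⟨j, h1, h2⟩).trans (htw ⟨j, h1, h2⟩).symm
    let v : ℤ → A := fun j => if j < 0 then t j else s j
    have hv : v ∈ S := hl s hs t ht fun j h1 h2 => hst j (by omega) (by omega)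
    have hsv : ∀ j, -m ≤ j → s j = v j := fun j hj => by
      by_cases h0 : j < 0
      · simpa [v, h0] using hst j hj (by omega)
      · simp [v, h0]
    have htv : ∀ j, j ≤ m → t j = v j := fun j hj => by
      by_cases h0 : j < 0
      · simp [v, h0]
      · simpa [v, h0] using (hst j (by omega) hj).symm
    exact ⟨φ v,
      mem_Ws_iff.2 fun n _ => h_near n s hs v hv fun j _ _ => hsv j (by omega),
      mem_Wu_iff.2 fun n _ => h_near n t ht v hv fun j _ _ => htv j (by omega)⟩

end Subshift

lemma FinitelyPresented.hasRectangleCovers {Y : Type*} [MetricSpace Y] {f : Equiv.Perm Y}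
    (h : FinitelyPresented f) : HasRectangleCovers f := by
  obtain ⟨-, -, -, N, S, hS, h_inv, -, φ, hφ⟩ := h
  exact hφ.hasRectangleCovers hS h_inv

namespace HasRectangleCovers

universe u

variable {Y : Type*} [MetricSpace Y] {f : Equiv.Perm Y} {ρ r δ ε : ℝ}

lemma exists_finite_coloring_plaqueClose {Y : Type u} [MetricSpace Y] {f : Equiv.Perm Y}
    (hR : HasRectangleCovers f) (hs : IsPlaqueScale f ρ r) (hε : 0 < ε) :
    ∃ (β : Type u) (_ : Finite β) (col : Y → β),
      ∀ a b, col a = col b → PlaqueClose f ρ r ε a b := by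
  have hρ := hs.rho_pos
  obtain ⟨𝒦, h_fin, h_cover, h_rect⟩ := hR (min (ε / 2) (ρ / 4)) (by positivity)
  have := h_fin.to_subtype
  let col (y : Y) : Set 𝒦 × Set 𝒦 :=
    ({K | y ∈ (K : Set Y)}, {K | ((K : Set Y) ∩ Wu f (ρ / 4) y).Nonempty})
  have h_hol : ∀ a b, col a = col b → HasHolonomy f ρ ε (r - 2 * ε) a b := by
    intro a b hab z hz haz
    obtain ⟨K, hK, hzK⟩ := mem_sUnion.1 (h_cover ▸ mem_univ z)
    have hKa : (⟨K, hK⟩ : 𝒦) ∈ (col a).2 := ⟨z, hzK, hs.mem_Wu hz (by linarith)⟩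
    rw [hab] at hKa
    obtain ⟨p, hpK, hpb⟩ := hKa
    obtain ⟨w, hzw, hpw⟩ := (h_rect K hK).2 z hzK p hpK
    exact ⟨w, Ws_mono (by linarith [min_le_left (ε / 2) (ρ / 4)]) hzw,
      Wu_mono (by linarith [min_le_right (ε / 2) (ρ / 4)]) (mem_Wu_trans hpb hpw)⟩
  refine ⟨Set 𝒦 × Set 𝒦, inferInstance, col, fun a b hab =>
    ⟨?_, h_hol a b hab, h_hol b a hab.symm⟩⟩
  obtain ⟨K, hK, haK⟩ := mem_sUnion.1 (h_cover ▸ mem_univ a)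
  have hKb : (⟨K, hK⟩ : 𝒦) ∈ (col b).1 := hab ▸ haK
  obtain ⟨w, haw, hbw⟩ := (h_rect K hK).2 a haK b hKb
  linarith [dist_triangle_right a b w, dist_lt_of_mem_Ws haw, dist_lt_of_mem_Wu hbw,
    min_le_left (ε / 2) (ρ / 4)]

lemma exists_finite_coloring_orbitClose {Y : Type u} [MetricSpace Y] {f : Equiv.Perm Y}
    (hR : HasRectangleCovers f) (hs : IsPlaqueScale f ρ r) (hε : 0 < ε) :
    ∃ (β : Type u) (_ : Finite β) (col : Y → β),
      ∀ a b, col a = col b → OrbitClose f ρ r ε a b := by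
  obtain ⟨β, _, col, h_col⟩ := hR.exists_finite_coloring_plaqueClose hs hε
  let J := Finset.Icc (-(⌈1 / ε⌉₊ : ℤ)) ⌈1 / ε⌉₊
  exact ⟨J → β, inferInstance, fun y j => col ((f ^ (j : ℤ)) y), fun a b hab n hn =>
    h_col _ _ (congrFun hab
      ⟨n, Finset.mem_Icc.2 (abs_le.1 (abs_le_natCeil_of_mul_le_one hε hn))⟩)⟩

variable [CompactSpace Y]

lemma exists_ball_hasHolonomy [Nonempty Y] (hR : HasRectangleCovers f) (hρ : 0 < ρ)
    (hδ : 0 < δ) : ∃ q : Y, ∃ η > 0, ∀ a ∈ Metric.ball q η, ∀ b ∈ Metric.ball q η,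
      HasHolonomy f ρ δ η a b := by
  obtain ⟨𝒦, h_fin, h_cover, h_rect⟩ := hR (min δ ρ) (lt_min hδ hρ)
  have := h_fin.to_subtype
  obtain ⟨⟨K, hK⟩, q, hq⟩ := nonempty_interior_of_iUnion_of_closed
    (f := fun K : 𝒦 => (K : Set Y)) (fun K => (h_rect K K.2).1) (by rwa [← sUnion_eq_iUnion])
  obtain ⟨η, hη, h_ball⟩ := Metric.isOpen_iff.1 isOpen_interior q hq
  refine ⟨q, η / 2, half_pos hη, fun a ha b hb u _ hau => ?_⟩
  rw [Metric.mem_ball] at ha hb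
  have huK : u ∈ K := interior_subset (h_ball (by
    rw [Metric.mem_ball]
    linarith [dist_triangle_left u q a]))
  have hbK : b ∈ K := interior_subset (h_ball (by
    rw [Metric.mem_ball]
    linarith))
  obtain ⟨w, huw, hbw⟩ := (h_rect K hK).2 u huK b hbK
  exact ⟨w, Ws_mono (min_le_left _ _) huw, Wu_mono (min_le_right _ _) hbw⟩

lemma eventually_orbitClose (hR : HasRectangleCovers f) (hs : IsPlaqueScale f ρ r) {y : Y}
    (hy : IsBackwardGeneric f y) (hε : 0 < ε) : ∀ᶠ v in 𝓝 y, OrbitClose f ρ r ε v y := by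
  have hr := hs.r_pos
  have : Nonempty Y := ⟨y⟩
  obtain ⟨q, η, hη, h_ball⟩ :=
    hR.exists_ball_hasHolonomy hs.rho_pos (by positivity : 0 < r / 4)
  obtain ⟨M, γ, hγ, H⟩ := hs.exists_orbitClose_of_hasHolonomy
    (lt_min hη (by positivity : 0 < r / 4)) (min_le_right _ _) hε
  obtain ⟨s, hsM, hys⟩ := Filter.frequently_atBot.1
    (hy _ (Metric.isOpen_ball (x := q) (ε := η)) (Metric.nonempty_ball.2 hη)) (-M)
  have h_near : ∀ᶠ v in 𝓝 y, (f ^ s) v ∈ Metric.ball q η :=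
    (continuous_perm_zpow hs.continuous s).continuousAt (Metric.isOpen_ball.mem_nhds hys)
  have h_window : ∀ᶠ v in 𝓝 y, ∀ j ∈ Finset.Icc s M, dist ((f ^ j) v) ((f ^ j) y) < γ :=
    (Filter.eventually_all_finset _).2 fun j _ =>
      (continuous_perm_zpow hs.continuous j).continuousAt (Metric.ball_mem_nhds _ hγ)
  filter_upwards [h_near, h_window] with v hv hvy
  exact H v y s hsM ((h_ball _ hv _ hys).mono le_rfl (min_le_left _ _))
    ((h_ball _ hys _ hv).mono le_rfl (min_le_left _ _))
    fun j hj => hvy j (Finset.mem_Icc.2 hj)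

end HasRectangleCovers

/-! ### The space of generic points -/

section GenericPoint

variable {Y : Type*} [MetricSpace Y] {f : Equiv.Perm Y} {ρ r ε : ℝ} {a b : Y}

/-- The distance whose `ε`-balls are, up to boundaries, the `OrbitClose f ρ r ε`-balls. -/
noncomputable def orbitDist (f : Equiv.Perm Y) (ρ r : ℝ) (a b : Y) : ℝ :=
  sInf {ε | OrbitClose f ρ r ε a b}

lemma orbitDist_nonneg (f : Equiv.Perm Y) (ρ r : ℝ) (a b : Y) : 0 ≤ orbitDist f ρ r a b :=
  Real.sInf_nonneg fun _ h => (OrbitClose.pos h).le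

lemma OrbitClose.orbitDist_le (h : OrbitClose f ρ r ε a b) : orbitDist f ρ r a b ≤ ε :=
  csInf_le ⟨0, fun _ h' => (OrbitClose.pos h').le⟩ h

lemma OrbitClose.of_orbitDist_lt (h : orbitDist f ρ r a b < ε) : OrbitClose f ρ r ε a b := by
  have h_ne : {ε | OrbitClose f ρ r ε a b}.Nonempty := by
    refine ⟨max 1 (max r (dist a b)) + 1, .of_lt_dist ?_ ?_ ?_⟩
    · linarith [le_max_left 1 (max r (dist a b))]
    · linarith [(le_max_left r (dist a b)).trans (le_max_right 1 _)]
    · linarith [(le_max_right r (dist a b)).trans (le_max_right 1 _)]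
  obtain ⟨ε', hε', h_lt⟩ := exists_lt_of_csInf_lt h_ne h
  exact OrbitClose.mono hε' h_lt.le

lemma dist_le_orbitDist (f : Equiv.Perm Y) (ρ r : ℝ) (a b : Y) :
    dist a b ≤ orbitDist f ρ r a b :=
  le_of_forall_gt fun _ h => (OrbitClose.of_orbitDist_lt h).plaqueClose.dist_lt

lemma orbitDist_self (f : Equiv.Perm Y) (ρ r : ℝ) (a : Y) : orbitDist f ρ r a a = 0 :=
  le_antisymm (le_of_forall_gt_imp_ge_of_dense fun _ hε => (OrbitClose.refl hε a).orbitDist_le)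
    (orbitDist_nonneg f ρ r a a)

lemma orbitDist_comm (f : Equiv.Perm Y) (ρ r : ℝ) (a b : Y) :
    orbitDist f ρ r a b = orbitDist f ρ r b a :=
  congrArg sInf (ext fun _ => ⟨OrbitClose.symm, OrbitClose.symm⟩)

lemma orbitDist_triangle (f : Equiv.Perm Y) (ρ r : ℝ) (a b c : Y) :
    orbitDist f ρ r a c ≤ orbitDist f ρ r a b + orbitDist f ρ r b c := by
  refine le_of_forall_pos_le_add fun ε hε => ?_
  have hab := OrbitClose.of_orbitDist_lt (lt_add_of_pos_right (orbitDist f ρ r a b) (half_pos hε))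
  have hbc := OrbitClose.of_orbitDist_lt (lt_add_of_pos_right (orbitDist f ρ r b c) (half_pos hε))
  linarith [(hab.trans hbc).orbitDist_le]

/-- The backward generic points of `f`, as a type carrying the metric `orbitDist f ρ r`; the
parameters `ρ` and `r` only serve to select that metric. -/
@[ext]
structure GenericPoint (f : Equiv.Perm Y) (ρ r : ℝ) where
  pt : Y
  generic : IsBackwardGeneric f pt

namespace GenericPoint

noncomputable instance : MetricSpace (GenericPoint f ρ r) where
  dist a b := orbitDist f ρ r a.pt b.pt
  dist_self a := orbitDist_self f ρ r a.pt
  dist_comm a b := orbitDist_comm f ρ r a.pt b.pt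
  dist_triangle a b c := orbitDist_triangle f ρ r a.pt b.pt c.pt
  eq_of_dist_eq_zero {a b} h := GenericPoint.ext <|
    dist_le_zero.1 ((dist_le_orbitDist f ρ r a.pt b.pt).trans_eq h)

lemma dist_def (a b : GenericPoint f ρ r) : dist a b = orbitDist f ρ r a.pt b.pt := rfl

lemma lipschitzWith_pt : LipschitzWith 1 (pt : GenericPoint f ρ r → Y) :=
  LipschitzWith.mk_one fun a b => dist_le_orbitDist f ρ r a.pt b.pt

/-- The map induced by `f` on its backward generic points. -/
def shift (f : Equiv.Perm Y) (ρ r : ℝ) : Equiv.Perm (GenericPoint f ρ r) where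
  toFun a := ⟨f a.pt, by simpa using a.generic.zpow 1⟩
  invFun a := ⟨f.symm a.pt, by simpa using a.generic.zpow (-1)⟩
  left_inv a := GenericPoint.ext (f.symm_apply_apply a.pt)
  right_inv a := GenericPoint.ext (f.apply_symm_apply a.pt)

lemma semiconj_pt : Function.Semiconj (pt : GenericPoint f ρ r → Y) (shift f ρ r) f := fun _ => rfl

lemma uniformContinuous_shift_zpow (m : ℤ) : UniformContinuous (shift f ρ r ^ m) := by
  refine Metric.uniformContinuous_iff_le.2 fun ε hε =>
    ⟨ε / (1 + |(m : ℝ)| * ε) / 2, by positivity, fun {a b} hab => ?_⟩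
  have h_lt : orbitDist f ρ r a.pt b.pt < ε / (1 + |(m : ℝ)| * ε) :=
    hab.trans_lt (half_lt_self (by positivity))
  rw [dist_def, semiconj_zpow semiconj_pt, semiconj_zpow semiconj_pt]
  exact ((OrbitClose.of_orbitDist_lt h_lt).zpow m hε).orbitDist_le

lemma totallyBounded_univ (hR : HasRectangleCovers f) (hs : IsPlaqueScale f ρ r) :
    TotallyBounded (univ : Set (GenericPoint f ρ r)) := by
  refine Metric.totallyBounded_of_finite_discretization fun ε hε => ?_
  obtain ⟨β, _, col, h_col⟩ := hR.exists_finite_coloring_orbitClose hs (half_pos hε)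
  exact ⟨β, Fintype.ofFinite β, fun a => col a.1.pt, fun a b hab =>
    (h_col _ _ hab).orbitDist_le.trans_lt (half_lt_self hε)⟩

variable [CompactSpace Y]

lemma isInducing_pt (hR : HasRectangleCovers f) (hs : IsPlaqueScale f ρ r) :
    IsInducing (pt : GenericPoint f ρ r → Y) := by
  refine isInducing_iff_nhds.2 fun a => le_antisymm
    (lipschitzWith_pt.continuous.tendsto a).le_comap ?_
  refine Metric.nhds_basis_ball.ge_iff.2 fun ε hε => ?_
  refine mem_comap.2 ⟨_, hR.eventually_orbitClose hs a.generic (half_pos hε), fun b hb => ?_⟩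
  exact (OrbitClose.orbitDist_le hb).trans_lt (half_lt_self hε)

lemma denseRange_pt (hf : Continuous f) (ht : TopTransitive f) :
    DenseRange (pt : GenericPoint f ρ r → Y) :=
  (ht.dense_isBackwardGeneric hf).mono fun y hy => ⟨⟨y, hy⟩, rfl⟩

lemma topTransitive_shift (hR : HasRectangleCovers f) (hs : IsPlaqueScale f ρ r)
    (ht : TopTransitive f) : TopTransitive (shift f ρ r) :=
  ht.of_isInducing hs.continuous (isInducing_pt hR hs) (denseRange_pt hs.continuous ht) semiconj_pt

lemma hasBrackets_shift (hs : IsPlaqueScale f ρ r) : HasBrackets (shift f ρ r) := by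
  intro ε hε
  obtain ⟨δ, hδ, H⟩ := hs.exists_bracket (half_pos hε)
  refine ⟨δ, hδ, fun a b hab => ?_⟩
  obtain ⟨w, hbw, h_future, h_past⟩ := H a.pt b.pt (OrbitClose.of_orbitDist_lt hab)
  refine ⟨⟨w, b.generic.of_mem_unstableSet hbw⟩, mem_Ws_iff.2 fun k hk => ?_,
    mem_Wu_iff.2 fun k hk => ?_⟩
  all_goals rw [dist_def, semiconj_zpow semiconj_pt, semiconj_zpow semiconj_pt]
  · exact (h_future k hk).orbitDist_le.trans_lt (half_lt_self hε)
  · exact (h_past k hk).orbitDist_le.trans_lt (half_lt_self hε)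

end GenericPoint

end GenericPoint

/-! ### Passing to the completion -/

lemma subset_of_denseRange_of_forall_mem_prod {D X : Type*} [TopologicalSpace X] {e : D → X}
    (h_dense : DenseRange e) {U C : Set (X × X)} (hU : IsOpen U) (hC : IsClosed C)
    (h : ∀ a b, (e a, e b) ∈ U → (e a, e b) ∈ C) : U ⊆ C :=
  ((h_dense.prodMap h_dense).open_subset_closure_inter hU).trans <| closure_minimal
    (by rintro _ ⟨hp, ⟨a, b⟩, rfl⟩; exact h a b hp) hC

section DenseRange

variable {D X Y : Type*} [MetricSpace D] [MetricSpace X] [MetricSpace Y]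
  {F : Equiv.Perm D} {g : Equiv.Perm X} {f : Equiv.Perm Y} {e : D → X} {π : X → Y} {c δ : ℝ}

/-- A quantitative form of: two points of a fibre of `π` whose orbits under `g` are `δ`-close at
arbitrarily negative times coincide. -/
def PastSeparatesFibres (g : Equiv.Perm X) (f : Equiv.Perm Y) (π : X → Y) (δ : ℝ) : Prop :=
  ∀ ε > 0, ∃ M : ℕ, ∃ γ > 0, ∀ (x y : X) (s : ℤ), s ≤ -M → dist ((g ^ s) x) ((g ^ s) y) < δ →
    (∀ j ∈ Icc s M, dist ((f ^ j) (π x)) ((f ^ j) (π y)) < γ) → dist x y ≤ ε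

namespace PastSeparatesFibres

lemma eq_of_frequently (h : PastSeparatesFibres g f π δ) {x y : X} (hxy : π x = π y)
    (h_freq : ∃ᶠ k : ℤ in atBot, dist ((g ^ k) x) ((g ^ k) y) < δ) : x = y := by
  refine eq_of_forall_dist_le fun ε hε => ?_
  obtain ⟨M, γ, hγ, H⟩ := h ε hε
  obtain ⟨s, hsM, hs⟩ := Filter.frequently_atBot.1 h_freq (-M)
  exact H x y s hsM hs fun j _ => by rwa [hxy, dist_self]

lemma uResolving (h : PastSeparatesFibres g f π δ) (hδ : 0 < δ) : UResolving g π := by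
  intro z x hx y hy hxy
  have h_ev := (mem_unstableSet_iff.1 hx _ (half_pos hδ)).and
    (mem_unstableSet_iff.1 hy _ (half_pos hδ))
  refine h.eq_of_frequently hxy (h_ev.mono fun k hk => ?_).frequently
  linarith [dist_triangle_left ((g ^ k) x) ((g ^ k) y) ((g ^ k) z), hk.1, hk.2]

lemma exists_expansive (h : PastSeparatesFibres g f π δ) (hδ : 0 < δ) (hc : 0 < c)
    (he : Expansive f c) (hπ : UniformContinuous π) (h_conj : Function.Semiconj π g f) :
    ∃ c' > 0, Expansive g c' := by
  obtain ⟨κ, hκ, h_mod⟩ := Metric.uniformContinuous_iff.1 hπ c hc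
  refine ⟨min (κ / 2) (δ / 2), by positivity, fun x y hxy => ?_⟩
  by_contra! h_close
  refine hxy (h.eq_of_frequently (he.eq_of_forall_dist_le fun n => ?_)
    (Frequently.of_forall fun k => ?_))
  · rw [← semiconj_zpow h_conj, ← semiconj_zpow h_conj]
    exact (h_mod (by linarith [h_close n, min_le_left (κ / 2) (δ / 2)])).le
  · linarith [h_close k, min_le_right (κ / 2) (δ / 2)]

lemma of_denseRange [CompactSpace X] [CompactSpace Y] (h : PastSeparatesFibres F f (π ∘ e) δ)
    (he : Isometry e) (h_dense : DenseRange e) (h_conj : Function.Semiconj e F g)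
    (hg : Continuous g) (hf : Continuous f) (hπ : Continuous π) :
    PastSeparatesFibres g f π δ := by
  intro ε hε
  obtain ⟨M, γ, hγ, H⟩ := h ε hε
  refine ⟨M, γ, hγ, fun x y s hsM hs hxy => ?_⟩
  let U : Set (X × X) := {z | dist ((g ^ s) z.1) ((g ^ s) z.2) < δ} ∩
    ⋂ j ∈ Finset.Icc s M, {z | dist ((f ^ j) (π z.1)) ((f ^ j) (π z.2)) < γ}
  have hgs := continuous_perm_zpow hg s
  have hfπ := fun j => (continuous_perm_zpow hf j).comp hπ
  have hU : IsOpen U :=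
    (isOpen_lt (continuous_dist.comp (hgs.prodMap hgs)) continuous_const).inter
      (isOpen_biInter_finset fun j _ =>
        isOpen_lt (continuous_dist.comp ((hfπ j).prodMap (hfπ j))) continuous_const)
  have h_sub : U ⊆ {z | dist z.1 z.2 ≤ ε} := by
    refine subset_of_denseRange_of_forall_mem_prod h_dense hU
      (isClosed_le continuous_dist continuous_const) fun a b hab => ?_
    refine (he.dist_eq a b).trans_le (H a b s hsM ?_ fun j hj => ?_)
    · rw [← he.dist_eq, semiconj_zpow h_conj, semiconj_zpow h_conj]
      exact hab.1
    · exact mem_iInter₂.1 hab.2 j (Finset.mem_Icc.2 hj)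
  exact h_sub (show (x, y) ∈ U from ⟨hs, mem_iInter₂.2 fun j hj => hxy j (Finset.mem_Icc.1 hj)⟩)

end PastSeparatesFibres

lemma HasBrackets.of_denseRange [CompactSpace X] (h : HasBrackets F) (he : Isometry e)
    (h_dense : DenseRange e) (h_conj : Function.Semiconj e F g) (hg : Continuous g) :
    HasBrackets g := by
  intro ε hε
  obtain ⟨δ, hδ, H⟩ := h (ε / 2) (half_pos hε)
  refine ⟨δ, hδ, fun x y hxy => ?_⟩
  let T : Set ((X × X) × X) :=
    (⋂ k ∈ Ici (0 : ℤ), {p | dist ((g ^ k) p.1.1) ((g ^ k) p.2) ≤ ε / 2}) ∩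
      ⋂ k ∈ Iic (0 : ℤ), {p | dist ((g ^ k) p.1.2) ((g ^ k) p.2) ≤ ε / 2}
  have hT : IsClosed T := by
    have hgc := continuous_perm_zpow hg
    refine (isClosed_biInter fun k _ => ?_).inter (isClosed_biInter fun k _ => ?_)
    · exact isClosed_le (((hgc k).comp continuous_fst.fst).dist ((hgc k).comp continuous_snd))
        continuous_const
    · exact isClosed_le (((hgc k).comp continuous_fst.snd).dist ((hgc k).comp continuous_snd))
        continuous_const
  have h_sub : {p : X × X | dist p.1 p.2 < δ} ⊆ Prod.fst '' T := by
    refine subset_of_denseRange_of_forall_mem_prod h_dense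
      (isOpen_lt continuous_dist continuous_const) (isClosedMap_fst_of_compactSpace _ hT)
      fun a b hab => ?_
    obtain ⟨w, haw, hbw⟩ := H a b ((he.dist_eq a b).symm.trans_lt hab)
    have h_dist : ∀ (k : ℤ) (p q : D),
        dist ((g ^ k) (e p)) ((g ^ k) (e q)) = dist ((F ^ k) p) ((F ^ k) q) := fun k p q => by
      rw [← semiconj_zpow h_conj, ← semiconj_zpow h_conj, he.dist_eq]
    exact ⟨((e a, e b), e w),
      ⟨mem_iInter₂.2 fun k hk => (h_dist k a w).trans_le (mem_Ws_iff.1 haw k hk).le,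
        mem_iInter₂.2 fun k hk => (h_dist k b w).trans_le (mem_Wu_iff.1 hbw k hk).le⟩, rfl⟩
  obtain ⟨⟨_, w⟩, ⟨hws, hwu⟩, rfl⟩ :=
    h_sub (show (x, y) ∈ {p : X × X | dist p.1 p.2 < δ} from hxy)
  exact ⟨w, mem_Ws_iff.2 fun k hk => (mem_iInter₂.1 hws k hk).trans_lt (half_lt_self hε),
    mem_Wu_iff.2 fun k hk => (mem_iInter₂.1 hwu k hk).trans_lt (half_lt_self hε)⟩

lemma TopTransitive.of_denseRange (ht : TopTransitive F) (he : Continuous e)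
    (h_dense : DenseRange e) (h_conj : Function.Semiconj e F g) : TopTransitive g := by
  intro U V hU hV hUn hVn
  obtain ⟨a, ha⟩ := h_dense.exists_mem_open hU hUn
  obtain ⟨b, hb⟩ := h_dense.exists_mem_open hV hVn
  obtain ⟨n, w, hwU, hwV⟩ := ht _ _ (hU.preimage he) (hV.preimage he) ⟨a, ha⟩ ⟨b, hb⟩
  exact ⟨n, e w, by rwa [mem_preimage, mem_preimage, semiconj_zpow h_conj] at hwU, hwV⟩

end DenseRange

/-! ### The minimal extension -/

section MinimalExtension

open UniformSpace

variable {Y : Type*} [MetricSpace Y] {f : Equiv.Perm Y} {ρ r : ℝ}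

lemma IsPlaqueScale.pastSeparatesFibres_pt [CompactSpace Y] (hs : IsPlaqueScale f ρ r) :
    PastSeparatesFibres (GenericPoint.shift f ρ r) f GenericPoint.pt (r / 4) := by
  intro ε hε
  have hr := hs.r_pos
  obtain ⟨M, γ, hγ, H⟩ :=
    hs.exists_orbitClose_of_hasHolonomy (by positivity : 0 < r / 4) le_rfl hε
  refine ⟨M, γ, hγ, fun a b s hsM hab h_close => ?_⟩
  rw [GenericPoint.dist_def, semiconj_zpow GenericPoint.semiconj_pt,
    semiconj_zpow GenericPoint.semiconj_pt] at hab
  have h_plaque := (OrbitClose.of_orbitDist_lt hab).plaqueClose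
  exact (H a.pt b.pt s hsM (h_plaque.forward.mono le_rfl (by linarith))
    (h_plaque.backward.mono le_rfl (by linarith)) h_close).orbitDist_le

/-- The completion of the space of generic points: the minimal extension of `f`. -/
abbrev MinimalExtension (f : Equiv.Perm Y) (ρ r : ℝ) := Completion (GenericPoint f ρ r)

namespace MinimalExtension

/-- The extension of `GenericPoint.shift` to the completion. -/
noncomputable def shift (f : Equiv.Perm Y) (ρ r : ℝ) : Equiv.Perm (MinimalExtension f ρ r) :=
  (Completion.mapEquiv
    { GenericPoint.shift f ρ r with
      uniformContinuous_toFun := by simpa using GenericPoint.uniformContinuous_shift_zpow 1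
      uniformContinuous_invFun := by
        simpa using GenericPoint.uniformContinuous_shift_zpow (-1) }).toEquiv

lemma continuous_shift : Continuous (shift f ρ r) :=
  Completion.continuous_map

lemma continuous_shift_symm : Continuous (shift f ρ r).symm :=
  Completion.continuous_map

lemma semiconj_coe : Function.Semiconj ((↑) : GenericPoint f ρ r → MinimalExtension f ρ r)
    (GenericPoint.shift f ρ r) (shift f ρ r) := fun a =>
  (Completion.map_coe (by simpa using GenericPoint.uniformContinuous_shift_zpow 1) a).symm

lemma compactSpace (hR : HasRectangleCovers f) (hs : IsPlaqueScale f ρ r) :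
    CompactSpace (MinimalExtension f ρ r) := by
  have h := (GenericPoint.totallyBounded_univ hR hs).image
    (Completion.uniformContinuous_coe (GenericPoint f ρ r))
  rw [image_univ] at h
  refine ⟨isCompact_iff_totallyBounded_isComplete.2 ⟨?_, isComplete_univ⟩⟩
  simpa only [Completion.denseRange_coe.closure_range] using h.closure

lemma topTransitive_shift [CompactSpace Y] (hR : HasRectangleCovers f) (hs : IsPlaqueScale f ρ r)
    (ht : TopTransitive f) : TopTransitive (shift f ρ r) :=
  (GenericPoint.topTransitive_shift hR hs ht).of_denseRange (Completion.continuous_coe _)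
    Completion.denseRange_coe semiconj_coe

/-- The factor map from the minimal extension, extending `GenericPoint.pt`. -/
noncomputable def proj (f : Equiv.Perm Y) (ρ r : ℝ) : MinimalExtension f ρ r → Y :=
  Completion.extension GenericPoint.pt

lemma proj_coe (a : GenericPoint f ρ r) : proj f ρ r a = a.pt :=
  Completion.extension_coe GenericPoint.lipschitzWith_pt.uniformContinuous a

variable [CompactSpace Y]

lemma uniformContinuous_proj : UniformContinuous (proj f ρ r) :=
  Completion.uniformContinuous_extension

lemma semiconj_proj (hf : Continuous f) :
    Function.Semiconj (proj f ρ r) (shift f ρ r) f := fun x => by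
  induction x using Completion.induction_on with
  | hp =>
    exact isClosed_eq (uniformContinuous_proj.continuous.comp continuous_shift)
      (hf.comp uniformContinuous_proj.continuous)
  | ih a => rw [← semiconj_coe, proj_coe, proj_coe, GenericPoint.semiconj_pt]

lemma isFactorMap_proj (hR : HasRectangleCovers f) (hs : IsPlaqueScale f ρ r)
    (ht : TopTransitive f) : IsFactorMap (shift f ρ r) f (proj f ρ r) := by
  have h_cont : Continuous (proj f ρ r) := uniformContinuous_proj.continuous
  have := compactSpace hR hs
  refine ⟨h_cont, range_eq_univ.1 (univ_subset_iff.1 ?_), semiconj_proj hs.continuous⟩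
  rw [← (GenericPoint.denseRange_pt (ρ := ρ) (r := r) hs.continuous ht).closure_range]
  refine closure_minimal ?_ (isCompact_range h_cont).isClosed
  rintro _ ⟨a, rfl⟩
  exact ⟨a, proj_coe a⟩

lemma pastSeparatesFibres_proj (hR : HasRectangleCovers f) (hs : IsPlaqueScale f ρ r) :
    PastSeparatesFibres (shift f ρ r) f (proj f ρ r) (r / 4) := by
  have := compactSpace hR hs
  refine .of_denseRange ?_ Completion.coe_isometry Completion.denseRange_coe semiconj_coe
    continuous_shift hs.continuous uniformContinuous_proj.continuous
  have h_comp : proj f ρ r ∘ ((↑) : GenericPoint f ρ r → MinimalExtension f ρ r) =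
      GenericPoint.pt := funext proj_coe
  rw [h_comp]
  exact hs.pastSeparatesFibres_pt

lemma uResolving_proj (hR : HasRectangleCovers f) (hs : IsPlaqueScale f ρ r) :
    UResolving (shift f ρ r) (proj f ρ r) :=
  (pastSeparatesFibres_proj hR hs).uResolving (by linarith [hs.r_pos])

lemma isSmale_shift (hR : HasRectangleCovers f) (hs : IsPlaqueScale f ρ r) :
    IsSmale (shift f ρ r) := by
  have := compactSpace hR hs
  have h_brackets : HasBrackets (shift f ρ r) := (GenericPoint.hasBrackets_shift hs).of_denseRange
    Completion.coe_isometry Completion.denseRange_coe semiconj_coe continuous_shift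
  obtain ⟨c, hc, he⟩ := (pastSeparatesFibres_proj hR hs).exists_expansive
    (by linarith [hs.r_pos]) (by linarith [hs.rho_pos]) hs.expansive uniformContinuous_proj
    (semiconj_proj hs.continuous)
  exact ⟨continuous_shift, continuous_shift_symm, ⟨c, hc, he⟩, he.canonicalCoords hc h_brackets⟩

end MinimalExtension

end MinimalExtension

/-! ### Lifting unstable plaques -/

lemma exists_isOpen_forall_subset_or_disjoint {Y ι : Type*} [TopologicalSpace Y] [Nonempty Y]
    (s : Finset ι) {K : ι → Set Y} (hK : ∀ i ∈ s, IsClosed (K i)) :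
    ∃ O : Set Y, IsOpen O ∧ O.Nonempty ∧ ∀ i ∈ s, O ⊆ K i ∨ Disjoint O (K i) := by
  classical
  induction s using Finset.induction_on with
  | empty => exact ⟨univ, isOpen_univ, univ_nonempty, by simp⟩
  | insert i s _ ih =>
    simp only [Finset.forall_mem_insert] at hK ⊢
    obtain ⟨O, hO, hOn, h⟩ := ih hK.2
    by_cases hi : O ⊆ K i
    · exact ⟨O, hO, hOn, Or.inl hi, h⟩
    · exact ⟨O \ K i, hO.sdiff hK.1, sdiff_nonempty.2 hi, Or.inr disjoint_sdiff_left,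
        fun j hj => (h j hj).imp sdiff_subset.trans (Disjoint.mono_left sdiff_subset)⟩

lemma exists_isOpen_forall_exists_dist_lt {X Y : Type*} [MetricSpace X] [CompactSpace X]
    [TopologicalSpace Y] [T2Space Y] [Nonempty Y] {α : X → Y} (hα : Continuous α) {δ : ℝ}
    (hδ : 0 < δ) :
    ∃ O : Set Y, IsOpen O ∧ O.Nonempty ∧
      ∀ p, α p ∈ O → ∀ y ∈ O, ∃ p', dist p' p < δ ∧ α p' = y := by
  have hδ' : 0 < δ / 3 := by positivity
  obtain ⟨t, -, ht, h_cover⟩ := finite_cover_balls_of_compact (isCompact_univ (X := X)) hδ'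
  lift t to Finset X using ht
  obtain ⟨O, hO, hOn, h⟩ := exists_isOpen_forall_subset_or_disjoint t
    (K := fun i => α '' Metric.closedBall i (δ / 3))
    fun i _ => (Metric.isClosed_closedBall.isCompact.image hα).isClosed
  refine ⟨O, hO, hOn, fun p hp y hy => ?_⟩
  obtain ⟨i, hi, hpi⟩ := mem_iUnion₂.1 (h_cover (mem_univ p))
  have hpi' := Metric.ball_subset_closedBall hpi
  have h_sub : O ⊆ α '' Metric.closedBall i (δ / 3) := (h i hi).resolve_right fun h_disj =>
    disjoint_left.1 h_disj hp (mem_image_of_mem α hpi')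
  obtain ⟨p', hp'i, hp'⟩ := h_sub hy
  refine ⟨p', ?_, hp'⟩
  linarith [dist_triangle_right p' p i, Metric.mem_closedBall.1 hp'i, Metric.mem_closedBall.1 hpi']

lemma CanonicalCoords.hasBrackets {X : Type*} [MetricSpace X] {f : Equiv.Perm X}
    (h : CanonicalCoords f) : HasBrackets f := by
  obtain ⟨ε₀, hε₀, H⟩ := h
  intro ε hε
  obtain ⟨δ, hδ, h_bracket⟩ := H (min ε ε₀) (lt_min hε hε₀) (min_le_right _ _)
  exact ⟨δ, hδ, fun x y hxy => (h_bracket x y hxy).exists.imp fun _ hz =>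
    ⟨Ws_mono (min_le_left _ _) hz.1, Wu_mono (min_le_left _ _) hz.2⟩⟩

section Lifting

variable {X Y : Type*} [MetricSpace X] [MetricSpace Y] {G : Equiv.Perm X} {f : Equiv.Perm Y}
  {α : X → Y} {ε : ℝ}

lemma exists_forall_mem_Ws_and_mem_Wu_map [CompactSpace X] (hα : Continuous α)
    (h_conj : Function.Semiconj α G f) (hε : 0 < ε) :
    ∃ δ > 0, (∀ x, ∀ w ∈ Ws G δ x, α w ∈ Ws f ε (α x)) ∧
      ∀ x, ∀ w ∈ Wu G δ x, α w ∈ Wu f ε (α x) := by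
  obtain ⟨δ, hδ, H⟩ := Metric.uniformContinuous_iff.1
    (CompactSpace.uniformContinuous_of_continuous hα) ε hε
  refine ⟨δ, hδ, fun x w hw n => ?_, fun x w hw n => ?_⟩ <;>
  · rw [← semiconj_zpow h_conj, ← semiconj_zpow h_conj]
    exact H (hw n)

namespace UResolving

variable [CompactSpace X] {c : ℝ}

lemma exists_dist_lt_of_forall_neg (hα : UResolving G α) (h_cont : Continuous α)
    (hG : Continuous G) (he : Expansive G c) (hε : 0 < ε) (hεc : ε ≤ c) :
    ∃ η > 0, ∀ x w : X, (∀ k : ℤ, k < 0 → dist ((G ^ k) x) ((G ^ k) w) ≤ ε) →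
      dist (α x) (α w) < η → dist x w < ε := by
  let S : Set (X × X) := {p | ε ≤ dist p.1 p.2} ∩
    ⋂ k ∈ Iio (0 : ℤ), {p | dist ((G ^ k) p.1) ((G ^ k) p.2) ≤ ε}
  have hS : IsCompact S := ((isClosed_le continuous_const continuous_dist).inter
    (isClosed_biInter fun k _ =>
      isClosed_le (continuous_dist.comp ((continuous_perm_zpow hG k).prodMap
        (continuous_perm_zpow hG k))) continuous_const)).isCompact
  have hS_pos : ∀ p ∈ S, 0 < dist (α p.1) (α p.2) := fun p ⟨h_far, h_past⟩ => by
    refine dist_pos.2 fun h_eq => ?_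
    have hp : p.2 ∈ unstableSet G p.1 := he.mem_unstableSet hG <| by
      filter_upwards [eventually_lt_atBot 0] with k hk
      exact (mem_iInter₂.1 h_past k hk).trans hεc
    have hp' : p.1 ∈ unstableSet G p.1 := mem_unstableSet_iff.2 fun δ hδ =>
      Eventually.of_forall fun _ => by rwa [dist_self]
    rw [mem_ofPred_eq, hα p.1 hp' hp h_eq, dist_self] at h_far
    exact h_far.not_gt hε
  obtain ⟨η, hη, H⟩ := hS.exists_forall_le'
    (continuous_dist.comp (h_cont.prodMap h_cont)).continuousOn hS_pos
  refine ⟨η, hη, fun x w h_past hxw => ?_⟩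
  by_contra! h_far
  exact hxw.not_ge (H (x, w) ⟨h_far, mem_iInter₂.2 h_past⟩)

lemma exists_mem_Wu_of_map_mem_Wu (hα : UResolving G α) (h_cont : Continuous α)
    (hG : Continuous G) (h_conj : Function.Semiconj α G f) (he : Expansive G c) (hc : 0 < c)
    (hε : 0 < ε) :
    ∃ η > 0, ∀ x, ∀ w ∈ unstableSet G x, α w ∈ Wu f η (α x) → w ∈ Wu G ε x := by
  have hε' : 0 < min ε c := lt_min hε hc
  obtain ⟨η, hη, H⟩ := hα.exists_dist_lt_of_forall_neg h_cont hG he hε' (min_le_right _ _)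
  refine ⟨η, hη, fun x w hw hαw => ?_⟩
  obtain ⟨n, hn⟩ := eventually_atBot.1 (mem_unstableSet_iff.1 hw _ hε')
  have h_forward : ∀ m, n ≤ m → ∀ k ≤ m, k ≤ 0 → dist ((G ^ k) x) ((G ^ k) w) < min ε c := by
    intro m hm
    induction m, hm using Int.leInduction with
    | base => exact fun k hk _ => hn k hk
    | succ m _ ih =>
      intro k hk hk0
      refine H _ _ (fun j hj => ?_) ?_
      · rw [← zpow_add_apply, ← zpow_add_apply]
        exact (ih (j + k) (by omega) (by omega)).le
      · rw [semiconj_zpow h_conj, semiconj_zpow h_conj]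
        exact mem_Wu_iff.1 hαw k hk0
  exact Wu_mono (min_le_left _ _) (mem_Wu_iff.2 fun k hk =>
    h_forward (max n 0) (le_max_left _ _) k (hk.trans (le_max_right _ _)) hk)

end UResolving

variable [CompactSpace X] [CompactSpace Y] {ρ r c : ℝ} {x : X}

/- At a suitable negative time both points lie in a set over which nearby preimages exist; the
bracket of the preimages then has the right image by expansiveness. -/
lemma exists_mem_unstableSet_map_eq (hf : Continuous f) (he : Expansive f (2 * ρ))
    (hρ : 0 < ρ) (hG : Continuous G) (heG : Expansive G c) (hc : 0 < c) (hb : HasBrackets G)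
    (h_cont : Continuous α) (h_conj : Function.Semiconj α G f)
    (hx : IsBackwardGeneric f (α x)) {u : Y} (hu : u ∈ Wu f ρ (α x)) :
    ∃ w ∈ unstableSet G x, α w = u := by
  have : Nonempty Y := ⟨u⟩
  obtain ⟨ε, hε, h_map_s, h_map_u⟩ := exists_forall_mem_Ws_and_mem_Wu_map h_cont h_conj hρ
  obtain ⟨δ, hδ, h_bracket⟩ := hb (min ε c) (lt_min hε hc)
  obtain ⟨O, hO, hOn, h_lift⟩ := exists_isOpen_forall_exists_dist_lt h_cont hδ
  have hu' : u ∈ unstableSet f (α x) := he.mem_unstableSet hf <| by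
    filter_upwards [eventually_le_atBot 0] with k hk
    linarith [mem_Wu_iff.1 hu k hk]
  obtain ⟨k, ⟨hxO, huO⟩, hk⟩ := ((hx.frequently_mem_and_mem hu' hO hOn).and_eventually
    (eventually_le_atBot 0)).exists
  rw [← semiconj_zpow h_conj] at hxO
  obtain ⟨x', hx', hx'u⟩ := h_lift _ hxO _ huO
  obtain ⟨w, hws, hwu⟩ := h_bracket x' ((G ^ k) x) hx'
  have hw : (f ^ k) u = α w := by
    refine he.eq_of_mem_Ws_of_mem_Wu ?_ ?_
    · rw [← hx'u]
      exact Ws_mono (by linarith) (h_map_s _ w (Ws_mono (min_le_left _ _) hws))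
    · have hxu : (f ^ k) u ∈ Wu f ρ (α ((G ^ k) x)) := by
        rw [semiconj_zpow h_conj]
        exact zpow_mem_Wu_zpow_iff.2 fun j hj => mem_Wu_iff.1 hu j (hj.trans hk)
      rw [two_mul]
      exact mem_Wu_trans (mem_Wu_symm hxu) (h_map_u _ w (Wu_mono (min_le_left _ _) hwu))
  have hw_unstable : w ∈ unstableSet G ((G ^ k) x) := heG.mem_unstableSet hG <| by
    filter_upwards [eventually_le_atBot 0] with j hj
    exact (mem_Wu_iff.1 hwu j hj).le.trans (min_le_right _ _)
  refine ⟨(G ^ (-k)) w, ?_, ?_⟩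
  · simpa only [zpow_neg_zpow_apply] using zpow_mem_unstableSet hw_unstable (-k)
  · rw [semiconj_zpow h_conj, ← hw, zpow_neg_zpow_apply]

namespace IsPlaqueScale

lemma exists_mem_Wu_map_eq (hs : IsPlaqueScale f ρ r) (hX : IsSmale G) (hα : IsFactorMap G f α)
    (hu : UResolving G α) (hε : 0 < ε) :
    ∃ η > 0, ∀ x, IsBackwardGeneric f (α x) → ∀ u ∈ Wu f ρ (α x), dist (α x) u < η →
      ∃ w ∈ Wu G ε x, α w = u := by
  obtain ⟨hG, -, ⟨c, hc, heG⟩, hG_coords⟩ := hX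
  obtain ⟨h_cont, -, h_conj⟩ := hα
  have hρ := hs.rho_pos
  obtain ⟨η', hη', H⟩ := hu.exists_mem_Wu_of_map_mem_Wu h_cont hG h_conj heG hc hε
  obtain ⟨η, hη, h_small⟩ := hs.expansive.exists_mem_Wu_of_dist_lt hs.continuous hη'
  refine ⟨η, hη, fun x hx u hxu h_dist => ?_⟩
  obtain ⟨w, hw, rfl⟩ := exists_mem_unstableSet_map_eq hs.continuous hs.expansive hρ hG heG hc
    hG_coords.hasBrackets h_cont h_conj hx hxu
  exact ⟨w, H x w hw (h_small _ _ (Wu_mono (by linarith) hxu) h_dist), rfl⟩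

lemma exists_hasHolonomy_map (hs : IsPlaqueScale f ρ r) (hX : IsSmale G)
    (hα : IsFactorMap G f α) (hu : UResolving G α) (hε : 0 < ε) :
    ∃ η > 0, ∃ δ > 0, ∀ x x', IsBackwardGeneric f (α x) → dist x x' < δ →
      HasHolonomy f ρ ε η (α x) (α x') := by
  obtain ⟨δ₁, hδ₁, h_map_s, -⟩ := exists_forall_mem_Ws_and_mem_Wu_map hα.1 hα.2.2 hε
  obtain ⟨δ₂, hδ₂, -, h_map_u⟩ := exists_forall_mem_Ws_and_mem_Wu_map hα.1 hα.2.2 hs.rho_pos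
  obtain ⟨δ, hδ, h_bracket⟩ := hX.2.2.2.hasBrackets (min δ₁ δ₂) (lt_min hδ₁ hδ₂)
  obtain ⟨η, hη, h_lift⟩ := hs.exists_mem_Wu_map_eq hX hα hu (half_pos hδ)
  refine ⟨η, hη, δ / 2, half_pos hδ, fun x x' hx hxx' u hxu h_dist => ?_⟩
  obtain ⟨w, hw, rfl⟩ := h_lift x hx u hxu h_dist
  have hwx' : dist w x' < δ := by linarith [dist_triangle_left w x' x, dist_lt_of_mem_Wu hw]
  obtain ⟨z, hws, hx'u⟩ := h_bracket w x' hwx'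
  exact ⟨α z, h_map_s _ z (Ws_mono (min_le_left _ _) hws),
    h_map_u _ z (Wu_mono (min_le_right _ _) hx'u)⟩

lemma exists_orbitClose_map (hs : IsPlaqueScale f ρ r) (hX : IsSmale G)
    (hα : IsFactorMap G f α) (hu : UResolving G α) (hε : 0 < ε) :
    ∃ κ > 0, ∀ x x', IsBackwardGeneric f (α x) → IsBackwardGeneric f (α x') → dist x x' < κ →
      OrbitClose f ρ r ε (α x) (α x') := by
  have hr : 0 < r / 4 := by linarith [hs.r_pos]
  obtain ⟨η, hη, δ, hδ, h_hol⟩ := hs.exists_hasHolonomy_map hX hα hu hr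
  obtain ⟨M, γ, hγ, H⟩ := hs.exists_orbitClose_of_hasHolonomy (lt_min hη hr) (min_le_right _ _) hε
  obtain ⟨γ', hγ', h_mod⟩ := Metric.uniformContinuous_iff.1
    (CompactSpace.uniformContinuous_of_continuous hα.1) γ hγ
  obtain ⟨κ, hκ, h_orbit⟩ := exists_forall_abs_le_dist_zpow_lt hX.1 M (lt_min hδ hγ')
  have h_hol_past : ∀ x x', IsBackwardGeneric f (α x) → dist x x' < κ →
      HasHolonomy f ρ (r / 4) (min η (r / 4))
        ((f ^ (-(M : ℤ))) (α x)) ((f ^ (-(M : ℤ))) (α x')) := by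
    intro x x' hx hxx'
    rw [← semiconj_zpow hα.2.2, ← semiconj_zpow hα.2.2]
    refine (h_hol _ _ ?_ ((h_orbit x x' hxx' _ (by simp)).trans_le (min_le_left _ _))).mono
      le_rfl (min_le_left _ _)
    rw [semiconj_zpow hα.2.2]
    exact hx.zpow _
  refine ⟨κ, hκ, fun x x' hx hx' hxx' => H _ _ (-M) le_rfl (h_hol_past x x' hx hxx')
    (h_hol_past x' x hx' (by rwa [dist_comm])) fun j hj => ?_⟩
  rw [← semiconj_zpow hα.2.2, ← semiconj_zpow hα.2.2]
  exact h_mod ((h_orbit x x' hxx' j (abs_le.2 hj)).trans_le (min_le_right _ _))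

end IsPlaqueScale

end Lifting

/-! ### Minimality -/

namespace MinimalExtension

open UniformSpace

variable {X Y : Type*} [MetricSpace X] [CompactSpace X] [MetricSpace Y] [CompactSpace Y]
  {G : Equiv.Perm X} {f : Equiv.Perm Y} {α : X → Y} {ρ r : ℝ}

lemma exists_continuous_lift (hs : IsPlaqueScale f ρ r) (hX : IsSmale G)
    (hα : IsFactorMap G f α) (hu : UResolving G α)
    (h_dense : Dense {x | IsBackwardGeneric f (α x)}) :
    ∃ β : X → MinimalExtension f ρ r, Continuous β ∧
      ∀ x (hx : IsBackwardGeneric f (α x)), β x = (⟨α x, hx⟩ : GenericPoint f ρ r) := by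
  let b : {x | IsBackwardGeneric f (α x)} → MinimalExtension f ρ r := fun x =>
    (⟨α x, x.2⟩ : GenericPoint f ρ r)
  have hb : UniformContinuous b := Metric.uniformContinuous_iff.2 fun ε hε => by
    obtain ⟨κ, hκ, H⟩ := hs.exists_orbitClose_map hX hα hu (half_pos hε)
    refine ⟨κ, hκ, fun {x x'} hxx' => ?_⟩
    rw [Completion.dist_eq, GenericPoint.dist_def]
    exact (H x x' x.2 x'.2 hxx').orbitDist_le.trans_lt (half_lt_self hε)
  have h_ind : IsUniformInducing ((↑) : {x | IsBackwardGeneric f (α x)} → X) :=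
    isUniformEmbedding_subtype_val.isUniformInducing
  exact ⟨(h_ind.isDenseInducing h_dense.denseRange_val).extend b,
    (uniformContinuous_uniformly_extend h_ind h_dense.denseRange_val hb).continuous,
    fun x hx => uniformly_extend_of_ind h_ind h_dense.denseRange_val hb ⟨x, hx⟩⟩

lemma exists_factor (hs : IsPlaqueScale f ρ r) (hX : IsSmale G) (hGt : TopTransitive G)
    (hα : IsFactorMap G f α) (hu : UResolving G α) :
    ∃ β : X → MinimalExtension f ρ r,
      IsFactorMap G (shift f ρ r) β ∧ UResolving G β ∧ α = proj f ρ r ∘ β := by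
  obtain ⟨h_cont, h_surj, h_conj⟩ := hα
  have h_dense : Dense {x | IsBackwardGeneric f (α x)} :=
    (hGt.dense_isBackwardGeneric hX.1).mono fun x hx => hx.image h_cont h_surj h_conj
  obtain ⟨β, hβ, hβ_eq⟩ := exists_continuous_lift hs hX ⟨h_cont, h_surj, h_conj⟩ hu h_dense
  have hαβ : α = proj f ρ r ∘ β :=
    h_cont.ext_on h_dense (uniformContinuous_proj.continuous.comp hβ) fun x hx => by
      rw [Function.comp_apply, hβ_eq x hx, proj_coe]
  have hβ_conj : β ∘ G = shift f ρ r ∘ β :=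
    (hβ.comp hX.1).ext_on h_dense (continuous_shift.comp hβ) fun x hx => by
      have hGx : IsBackwardGeneric f (α (G x)) := by simpa only [h_conj x, zpow_one] using hx.zpow 1
      rw [Function.comp_apply, Function.comp_apply, hβ_eq x hx, hβ_eq _ hGx, ← semiconj_coe]
      exact congrArg _ (GenericPoint.ext (h_conj x))
  have h_range : range ((↑) : GenericPoint f ρ r → MinimalExtension f ρ r) ⊆ range β := by
    rintro _ ⟨a, rfl⟩
    obtain ⟨x, hx⟩ := h_surj a.pt
    exact ⟨x, (hβ_eq x (hx ▸ a.generic)).trans (congrArg _ (GenericPoint.ext hx))⟩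
  have hβ_surj : range β = univ :=
    (isCompact_range hβ).isClosed.closure_eq.symm.trans
      (Completion.denseRange_coe.mono h_range).closure_eq
  refine ⟨β, ⟨hβ, range_eq_univ.1 hβ_surj, congrFun hβ_conj⟩, fun x => ?_, hαβ⟩
  exact InjOn.of_comp (hαβ ▸ hu x)

end MinimalExtension

theorem stmt7_general.{u, v} {Y : Type u} [MetricSpace Y] [CompactSpace Y] {f : Equiv.Perm Y}
    {c : ℝ} (hf : Continuous f) (hc : 0 < c) (he : Expansive f c) (hR : HasRectangleCovers f)
    (ht : TopTransitive f) :
    ∃ (Yp : Type u) (_ : MetricSpace Yp) (_ : CompactSpace Yp) (g : Equiv.Perm Yp) (πp : Yp → Y),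
      IsSmale g ∧ TopTransitive g ∧ IsFactorMap g f πp ∧ UResolving g πp ∧
      ∀ (X : Type v) (_ : MetricSpace X) (_ : CompactSpace X) (G : Equiv.Perm X) (α : X → Y),
        IsSmale G → TopTransitive G → IsFactorMap G f α → UResolving G α →
        ∃ β : X → Yp, IsFactorMap G g β ∧ UResolving G β ∧ α = πp ∘ β := by
  obtain ⟨ρ, r, hs⟩ := exists_isPlaqueScale hf hc he
  exact ⟨MinimalExtension f ρ r, inferInstance, MinimalExtension.compactSpace hR hs,
    MinimalExtension.shift f ρ r, MinimalExtension.proj f ρ r,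
    MinimalExtension.isSmale_shift hR hs, MinimalExtension.topTransitive_shift hR hs ht,
    MinimalExtension.isFactorMap_proj hR hs ht, MinimalExtension.uResolving_proj hR hs,
    fun _ _ _ _ _ hX hGt hα hu => MinimalExtension.exists_factor hs hX hGt hα hu⟩

/-- A transitive finitely presented system has a minimal transitive Smale
space extension among u-resolving extensions: every transitive Smale space u-resolving
extension factors through it by a u-resolving factor map. -/
theorem stmt7 {Y : Type} [MetricSpace Y] [CompactSpace Y] (f : Equiv.Perm Y)
    (hY : FinitelyPresented f) (hYt : TopTransitive f) :
    ∃ (Yp : Type) (mYp : MetricSpace Yp) (cYp : CompactSpace Yp)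
      (g : Equiv.Perm Yp) (πp : Yp → Y),
      IsSmale g ∧ TopTransitive g ∧ IsFactorMap g f πp ∧ UResolving g πp ∧
      ∀ (X : Type) (mX : MetricSpace X) (cX : CompactSpace X)
        (G : Equiv.Perm X) (α : X → Y),
        IsSmale G → TopTransitive G → IsFactorMap G f α → UResolving G α →
        ∃ β : X → Yp, IsFactorMap G g β ∧ UResolving G β ∧ α = πp ∘ β := by
  obtain ⟨c, hc, he⟩ := hY.2.2.1
  exact stmt7_general hY.1 hc he hY.hasRectangleCovers hYt
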